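/- arXiv:0712.4091 — 4 statements merged into one kernel-verified Lean document; each statement's English description precedes it below -/
import Mathlib

section
/- For every ε ∈ (0,1) and every compact subset K of {(t,γ) ∈ ℝ² : 0 < γ < t}, there exists M > 0 such that for all (t,γ) ∈ K and all integers k ≥ 1, the norming constants h_k of the monic orthogonal polynomials for the weight w satisfy |h_k · (1−q)^{2k+1} / ((k!)² q^{k+1}) − 1| ≤ M e^{−k^{1−ε}}, where q = e^{2γ−2t}. In particular, for fixed 0 < γ < t, h_k = ((k!)² q^{k+1}/(1−q)^{2k+1}) · (1 + O(e^{−k^{1−ε}})) as k → ∞. -/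
open Real Filter Finset

/-- The weight `w(l) = 2 e^{-2tl} sinh(2γl)` of the ferroelectric phase. -/
noncomputable def ferroWeight (t γ l : ℝ) : ℝ :=
  2 * Real.exp (-2 * t * l) * Real.sinh (2 * γ * l)


/-- Coefficient of the shifted polynomial. -/
lemma nc_taylor_coeff (n : ℕ) (p : Polynomial ℝ) (hp : p.natDegree ≤ n + 1) :
    (Polynomial.taylor 1 p).coeff n = p.coeff n + (n + 1) * p.coeff (n + 1) := by
  rw [Polynomial.taylor_coeff]
  have h1 : (Polynomial.hasseDeriv n p).natDegree ≤ 1 := by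
    refine (Polynomial.natDegree_hasseDeriv_le p n).trans (by omega)
  rw [Polynomial.eval_eq_sum_range' (n := 2) (by omega)]
  simp [Finset.sum_range_succ, Polynomial.hasseDeriv_coeff]
  rw [add_comm 1 n, Nat.choose_succ_self_right]; push_cast; ring

lemma nc_taylor_top (n : ℕ) (p : Polynomial ℝ) (hp : p.natDegree ≤ n) :
    (Polynomial.taylor 1 p).coeff n = p.coeff n := by
  have h := nc_taylor_coeff n p (by omega)
  rw [h, Polynomial.coeff_eq_zero_of_natDegree_lt (n := n + 1) (by omega)]; ring

lemma nc_natDegree_le_of_coeff {n : ℕ} {p : Polynomial ℝ} (hp : p.natDegree ≤ n + 1)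
    (h : p.coeff (n + 1) = 0) : p.natDegree ≤ n := by
  rw [Polynomial.natDegree_le_iff_coeff_eq_zero] at *
  intro N hN
  rcases eq_or_ne N (n + 1) with rfl | h'
  · exact h
  · exact hp N (by omega)

/-- The summation operator on polynomials. -/
lemma nc_exists_sum (n : ℕ) : ∀ p : Polynomial ℝ, p.natDegree ≤ n →
    ∃ g : Polynomial ℝ, g.natDegree ≤ n + 1 ∧ g.coeff (n + 1) = p.coeff n / (n + 1) ∧
      ∀ x : ℕ, g.eval (x : ℝ) = ∑ y ∈ range (x + 1), p.eval (y : ℝ) := by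
  -- it suffices to work with forward differences
  suffices H : ∀ p : Polynomial ℝ, p.natDegree ≤ n →
      ∃ g : Polynomial ℝ, g.natDegree ≤ n + 1 ∧ g.coeff (n + 1) = p.coeff n / (n + 1) ∧
        Polynomial.taylor 1 g - g = Polynomial.taylor 1 p by
    intro p hp
    obtain ⟨g, h1, h2, h3⟩ := H p hp
    refine ⟨g + Polynomial.C (p.eval 0 - g.eval 0), ?_, ?_, ?_⟩
    · exact (Polynomial.natDegree_add_C).trans_le h1
    · simp [Polynomial.coeff_C, h2]
    · intro x
      induction x with
      | zero => simp
      | succ x ih =>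
        rw [Finset.sum_range_succ, ← ih]
        have := congrArg (Polynomial.eval (x : ℝ)) h3
        simp [Polynomial.taylor_eval] at this
        simp
        linarith
  induction n with
  | zero =>
    intro p hp
    rw [Polynomial.eq_C_of_natDegree_le_zero hp]
    refine ⟨Polynomial.C (p.coeff 0) * Polynomial.X, ?_, ?_, ?_⟩
    · exact (Polynomial.natDegree_C_mul_le _ _).trans Polynomial.natDegree_X_le
    · simp
    · simp [mul_add]
  | succ n ih =>
    intro p hp
    set G : Polynomial ℝ := Polynomial.monomial (n + 2) (p.coeff (n + 1) / (n + 2)) with hG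
    have hGd : G.natDegree ≤ n + 2 := Polynomial.natDegree_monomial_le _
    have hd : (Polynomial.taylor 1 G - G).natDegree ≤ n + 1 := by
      apply nc_natDegree_le_of_coeff
      · exact (Polynomial.natDegree_sub_le _ _).trans (by simp [Polynomial.natDegree_taylor, hGd])
      · rw [Polynomial.coeff_sub, nc_taylor_top _ _ hGd, sub_self]
    set R : Polynomial ℝ := p - Polynomial.taylor (-1) (Polynomial.taylor 1 G - G) with hR
    have hRt : Polynomial.taylor 1 R = Polynomial.taylor 1 p - (Polynomial.taylor 1 G - G) := by
      rw [hR, map_sub, Polynomial.taylor_taylor]; simp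
    have hRd : R.natDegree ≤ n + 1 := by
      refine (Polynomial.natDegree_sub_le _ _).trans ?_
      rw [Polynomial.natDegree_taylor]; exact max_le hp hd
    have hRd' : R.natDegree ≤ n := by
      apply nc_natDegree_le_of_coeff hRd
      rw [← nc_taylor_top _ _ hRd, hRt, Polynomial.coeff_sub, Polynomial.coeff_sub,
        nc_taylor_top _ _ hp, nc_taylor_coeff _ _ hGd, hG]
      simp [Polynomial.coeff_monomial]
      field_simp
      push_cast
      ring
    obtain ⟨g, h1, h2, h3⟩ := ih R hRd'
    refine ⟨G + g, ?_, ?_, ?_⟩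
    · exact (Polynomial.natDegree_add_le _ _).trans (max_le hGd (by omega))
    · rw [Polynomial.coeff_add, Polynomial.coeff_eq_zero_of_natDegree_lt (p := g) (by omega), hG]
      simp [Polynomial.coeff_monomial]; ring
    · rw [map_add]
      have := h3.trans hRt
      linear_combination this

/-- Solving `g - q E g = p`. -/
lemma nc_exists_solve (q : ℝ) (hq : q < 1) (n : ℕ) : ∀ p : Polynomial ℝ, p.natDegree ≤ n →
    ∃ g : Polynomial ℝ, g.natDegree ≤ n ∧ (1 - q) * g.coeff n = p.coeff n ∧
      g - q • Polynomial.taylor 1 g = p := by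
  have hq' : 1 - q ≠ 0 := by linarith
  suffices H : ∀ p : Polynomial ℝ, p.natDegree ≤ n →
    ∃ g : Polynomial ℝ, g.natDegree ≤ n ∧ g - q • Polynomial.taylor 1 g = p by
    intro p hp
    obtain ⟨g, h1, h2⟩ := H p hp
    refine ⟨g, h1, ?_, h2⟩
    rw [← h2, Polynomial.coeff_sub, Polynomial.coeff_smul, nc_taylor_top _ _ h1]
    simp; ring
  induction n with
  | zero =>
    intro p hp
    rw [Polynomial.eq_C_of_natDegree_le_zero hp]
    refine ⟨Polynomial.C (p.coeff 0 / (1 - q)), by simp, ?_⟩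
    rw [Polynomial.taylor_C, Polynomial.smul_C, ← Polynomial.C_sub]
    congr 1
    simp; field_simp
  | succ n ih =>
    intro p hp
    set G : Polynomial ℝ := Polynomial.monomial (n + 1) (p.coeff (n + 1) / (1 - q)) with hG
    have hGd : G.natDegree ≤ n + 1 := Polynomial.natDegree_monomial_le _
    set R := p - (G - q • Polynomial.taylor 1 G) with hR
    have hRd : R.natDegree ≤ n := by
      apply nc_natDegree_le_of_coeff
      · refine (Polynomial.natDegree_sub_le _ _).trans (max_le hp ?_)
        refine (Polynomial.natDegree_sub_le _ _).trans (max_le hGd ?_)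
        refine (Polynomial.natDegree_smul_le _ _).trans ?_
        rwa [Polynomial.natDegree_taylor]
      · rw [hR, Polynomial.coeff_sub, Polynomial.coeff_sub, Polynomial.coeff_smul,
          nc_taylor_top _ _ hGd, hG]
        simp [Polynomial.coeff_monomial]
        field_simp; ring
    obtain ⟨g, h1, h2⟩ := ih R hRd
    refine ⟨G + g, (Polynomial.natDegree_add_le _ _).trans (max_le hGd (by omega)), ?_⟩
    rw [map_add, smul_add]
    linear_combination h2

/-- The Meixner polynomials, as values. -/
lemma nc_exists_meixner (q : ℝ) : ∃ m : ℕ → Polynomial ℝ,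
    m 0 = 1 ∧ (∀ n, (m n).natDegree ≤ n) ∧
    (∀ n, (m n).coeff n = (1 - 1 / q) ^ n / (Nat.factorial n : ℝ)) ∧
    (∀ n, ∀ x : ℕ, (m (n + 1)).eval (x : ℝ) =
      (1 - 1 / q) * ∑ y ∈ range (x + 1), (m n).eval (y : ℝ) + (m n).eval (x : ℝ) / q) := by
  choose S h1 h2 h3 using nc_exists_sum
  let T : (n : ℕ) → {p : Polynomial ℝ // p.natDegree ≤ n} := fun n =>
    Nat.rec ⟨1, by simp⟩ (fun n p => ⟨(1 - 1 / q) • S n p.1 p.2 + (1 / q) • p.1, by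
      refine (Polynomial.natDegree_add_le _ _).trans (max_le ?_ ?_)
      · exact (Polynomial.natDegree_smul_le _ _).trans (h1 _ _ _)
      · exact (Polynomial.natDegree_smul_le _ _).trans (p.2.trans (by omega))⟩) n
  have hT : ∀ n, (T (n + 1)).1 = (1 - 1 / q) • S n (T n).1 (T n).2 + (1 / q) • (T n).1 :=
    fun n => rfl
  refine ⟨fun n => (T n).1, rfl, fun n => (T n).2, ?_, ?_⟩
  · intro n
    induction n with
    | zero => simp [T]
    | succ n ih =>
      simp only at ih
      simp only
      rw [hT, Polynomial.coeff_add, Polynomial.coeff_smul, Polynomial.coeff_smul, h2, ih,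
        Polynomial.coeff_eq_zero_of_natDegree_lt (n := n + 1) (by have := (T n).2; omega),
        Nat.factorial_succ]
      push_cast
      simp only [smul_eq_mul]
      field_simp
      ring
  · intro n x
    simp only
    rw [hT, Polynomial.eval_add, Polynomial.eval_smul, Polynomial.eval_smul, h3]
    simp only [smul_eq_mul]
    ring

/-- Polynomials times geometric weights are summable. -/
lemma nc_summable (q : ℝ) (hq0 : 0 ≤ q) (hq1 : q < 1) (p : Polynomial ℝ) :
    Summable fun x : ℕ => p.eval (x : ℝ) * q ^ x := by
  simp_rw [Polynomial.eval_eq_sum_range, Finset.sum_mul]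
  apply summable_sum
  intro i _
  have := summable_pow_mul_geometric_of_norm_lt_one (R := ℝ) i (r := q)
    (by rw [Real.norm_of_nonneg hq0]; exact hq1)
  simpa [mul_assoc] using this.mul_left (p.coeff i)

/-- Orthogonality. -/
lemma nc_orth (q : ℝ) (hq0 : 0 < q) (hq1 : q < 1) (m : ℕ → Polynomial ℝ) (h0 : m 0 = 1)
    (hrec : ∀ n, ∀ x : ℕ, (m (n + 1)).eval (x : ℝ) =
      (1 - 1 / q) * ∑ y ∈ range (x + 1), (m n).eval (y : ℝ) + (m n).eval (x : ℝ) / q) (n : ℕ) :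
    ∀ p : Polynomial ℝ, p.natDegree ≤ n →
      ∑' x : ℕ, p.eval (x : ℝ) * (m n).eval (x : ℝ) * q ^ x =
        p.coeff n * ((-1) ^ n * (Nat.factorial n : ℝ) / (1 - q) ^ (n + 1)) := by
  have hs : ∀ (p r : Polynomial ℝ),
      Summable fun x : ℕ => p.eval (x : ℝ) * r.eval (x : ℝ) * q ^ x := by
    intro p r
    simpa using nc_summable q hq0.le hq1 (p * r)
  have hq' : 1 - q ≠ 0 := by linarith
  induction n with
  | zero =>
    intro p hp
    rw [Polynomial.eq_C_of_natDegree_le_zero hp]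
    simp [h0, tsum_mul_left, tsum_geometric_of_lt_one hq0.le hq1]
  | succ n ih =>
    intro p hp
    obtain ⟨g, hg, hgc, rfl⟩ := nc_exists_solve q hq1 (n + 1) p hp
    set G := Polynomial.taylor 1 g with hG
    have key : ∑' x : ℕ, (g - q • G).eval (x : ℝ) * (m (n + 1)).eval (x : ℝ) * q ^ x =
        ∑' x : ℕ, (g - G).eval (x : ℝ) * (m n).eval (x : ℝ) * q ^ x := by
      have e1 : ∀ r : Polynomial ℝ, ∀ c : ℝ,
          ∑' x : ℕ, (g - c • G).eval (x : ℝ) * r.eval (x : ℝ) * q ^ x =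
          g.eval 0 * r.eval 0 + ∑' x : ℕ, G.eval (x : ℝ) *
            (q * r.eval ((x : ℝ) + 1) - c * r.eval (x : ℝ)) * q ^ x := by
        intro r c
        have a1 : ∑' x : ℕ, (g - c • G).eval (x : ℝ) * r.eval (x : ℝ) * q ^ x =
            ∑' x : ℕ, g.eval (x : ℝ) * r.eval (x : ℝ) * q ^ x
            - ∑' x : ℕ, c * (G.eval (x : ℝ) * r.eval (x : ℝ) * q ^ x) := by
          rw [← (hs g r).tsum_sub ((hs G r).mul_left c)]
          congr 1; ext x; simp; ring
        rw [a1, (hs g r).tsum_eq_zero_add, add_sub_assoc,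
          ← ((summable_nat_add_iff 1).2 (hs g r)).tsum_sub ((hs G r).mul_left c)]
        congr 1
        · simp
        · congr 1; ext x
          simp [hG, Polynomial.taylor_eval]; ring
      have e2 := e1 (m n) 1
      rw [one_smul] at e2
      rw [e1 (m (n + 1)) q, e2]
      have hr0 := hrec n 0
      simp at hr0
      congr 1
      · rw [hr0]; field_simp; ring
      · congr 1; ext x
        have h1 := hrec n x
        have h2 := hrec n (x + 1)
        rw [Finset.sum_range_succ] at h2
        push_cast at h2
        have : q * (m (n + 1)).eval ((x : ℝ) + 1) - q * (m (n + 1)).eval (x : ℝ) =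
            q * (m n).eval ((x : ℝ) + 1) - 1 * (m n).eval (x : ℝ) := by
          rw [h1, h2]; field_simp; ring
        rw [this]
    rw [key]
    have hGd : G.natDegree ≤ n + 1 := by rw [hG, Polynomial.natDegree_taylor]; exact hg
    rw [ih (g - G) ?_, Polynomial.coeff_sub, hG, nc_taylor_coeff _ _ hg, ← hgc]
    · rw [Nat.factorial_succ]
      push_cast
      field_simp
      ring
    · apply nc_natDegree_le_of_coeff
      · exact (Polynomial.natDegree_sub_le _ _).trans (max_le hg hGd)
      · rw [Polynomial.coeff_sub, hG, nc_taylor_top _ _ hg, sub_self]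

/-- Norm bound. -/
lemma nc_norm_step (a b : ℝ) (ha0 : 0 < a) (ha1 : a < 1) (hb0 : 0 < b) (hb1 : b ≤ 1)
    (f g : ℕ → ℝ)
    (hrec : ∀ x : ℕ, g x = (1 - 1 / a ^ 2) * ∑ y ∈ range (x + 1), f y + f x / a ^ 2) (X : ℕ) :
    ∑ x ∈ range X, g x ^ 2 * (a * b) ^ (2 * x) ≤
      (((a + b) / (1 + a * b)) ^ 2 / a ^ 2) * ∑ x ∈ range X, f x ^ 2 * (a * b) ^ (2 * x) := by
  set T : ℝ := ((a + b) / (1 + a * b)) ^ 2 / a ^ 2 with hT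
  set ρ : ℝ := a * b with hρ
  have hρ0 : 0 < ρ := mul_pos ha0 hb0
  set v : ℕ → ℝ := fun x => ∑ y ∈ range (x + 1), f y with hv
  set κ : ℝ := ρ * (1 / a ^ 2 - T) with hκ
  set α : ℝ := T - 1 - κ with hα
  have hT2 : T * (1 + ρ) ^ 2 = (1 + ρ / a ^ 2) ^ 2 := by
    rw [hT, hρ]; field_simp
  have hκ0 : 0 ≤ κ := by
    apply mul_nonneg hρ0.le
    rw [hT, sub_nonneg]
    gcongr
    rw [div_pow, div_le_one (by positivity)]
    apply pow_le_pow_left₀ (by positivity)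
    nlinarith
  have hα0 : 0 ≤ α := by
    have : α * (1 + ρ) = (1 + ρ / a ^ 2) * (ρ / a ^ 2 - ρ) := by
      rw [hα, hκ]; linear_combination hT2
    have h2 : ρ ≤ ρ / a ^ 2 := by
      rw [le_div_iff₀ (by positivity)]
      nlinarith [mul_pos hρ0 ha0]
    have h3 : 0 ≤ α * (1 + ρ) := by
      rw [this]; apply mul_nonneg (by positivity); linarith
    exact nonneg_of_mul_nonneg_left h3 (by positivity)
  have hα2 : α = κ - T * ρ ^ 2 + ρ ^ 2 / a ^ 4 := by
    rw [hα, hκ]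
    have : (ρ ^ 2 / a ^ 4) = (ρ / a ^ 2) ^ 2 := by rw [div_pow]; ring
    rw [this]
    linear_combination hT2
  have main : ∀ X : ℕ, α * v X ^ 2 * ρ ^ (2 * X) ≤
      T * ∑ x ∈ range (X + 1), f x ^ 2 * ρ ^ (2 * x) -
        ∑ x ∈ range (X + 1), g x ^ 2 * ρ ^ (2 * x) := by
    intro X
    induction X with
    | zero =>
      have h1 : g 0 = f 0 := by rw [hrec]; simp; field_simp; ring
      simp [h1, hv]
      nlinarith [mul_nonneg hκ0 (sq_nonneg (f 0))]
    | succ X ih =>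
      rw [Finset.sum_range_succ _ (X + 1), Finset.sum_range_succ _ (X + 1)]
      have h1 : f (X + 1) = v (X + 1) - v X := by
        simp only [hv]; rw [Finset.sum_range_succ _ (X + 1)]; ring
      have h2 : g (X + 1) = v (X + 1) - v X / a ^ 2 := by
        rw [hrec, h1]; simp only [hv]; ring
      rw [h1, h2]
      have h3 : ρ ^ (2 * (X + 1)) = ρ ^ 2 * ρ ^ (2 * X) := by ring
      rw [h3]
      have h4 : T * (v (X + 1) - v X) ^ 2 * ρ ^ 2 - (v (X + 1) - v X / a ^ 2) ^ 2 * ρ ^ 2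
          + α * v X ^ 2 - α * v (X + 1) ^ 2 * ρ ^ 2 = κ * (v (X + 1) * ρ + v X) ^ 2 := by
        have e1 : (v (X + 1) - v X / a ^ 2) ^ 2 =
          v (X + 1) ^ 2 - 2 * v (X + 1) * v X * (1 / a ^ 2) + v X ^ 2 * (1 / a ^ 4) := by
          field_simp
          ring
        rw [e1]
        have e2 : ρ ^ 2 / a ^ 4 = ρ ^ 2 * (1 / a ^ 4) := by ring
        rw [e2] at hα2
        linear_combination (v X ^ 2) * hα2 - (v (X + 1) ^ 2 * ρ ^ 2) * hα
          - (2 * v X * v (X + 1) * ρ) * hκ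
      have h5 : 0 ≤ κ * (v (X + 1) * ρ + v X) ^ 2 * ρ ^ (2 * X) := by positivity
      rw [← h4] at h5
      nlinarith
  rcases X with _ | X
  · simp
  · have := main X
    have h6 : 0 ≤ α * v X ^ 2 * ρ ^ (2 * X) := by positivity
    linarith

lemma nc_norm (a b : ℝ) (ha0 : 0 < a) (ha1 : a < 1) (hb0 : 0 < b) (hb1 : b ≤ 1)
    (f : ℕ → ℕ → ℝ) (h0 : ∀ x, f 0 x = 1)
    (hrec : ∀ n, ∀ x : ℕ, f (n + 1) x =
      (1 - 1 / a ^ 2) * ∑ y ∈ range (x + 1), f n y + f n x / a ^ 2) (n X : ℕ) :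
    ∑ x ∈ range X, f n x ^ 2 * (a * b) ^ (2 * x) ≤
      (((a + b) / (1 + a * b)) ^ 2 / a ^ 2) ^ n / (1 - (a * b) ^ 2) := by
  have hab : a * b < 1 := by nlinarith
  have hab0 : 0 < a * b := by positivity
  induction n with
  | zero =>
    simp only [h0, pow_mul, one_pow, one_mul, pow_zero]
    have hl : (a * b) ^ 2 < 1 := by nlinarith
    rw [one_div, ← tsum_geometric_of_lt_one (by positivity) hl]
    exact (summable_geometric_of_lt_one (by positivity) hl).sum_le_tsum _
      (fun i _ => by positivity)
  | succ n ih =>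
    refine (nc_norm_step a b ha0 ha1 hb0 hb1 (f n) (f (n + 1)) (hrec n) X).trans ?_
    rw [pow_succ' (((a + b) / (1 + a * b)) ^ 2 / a ^ 2) n, mul_div_assoc]
    exact mul_le_mul_of_nonneg_left ih (by positivity)

/-- Two-sided bound on the norming constants. -/
lemma nc_core (a b : ℝ) (ha0 : 0 < a) (ha1 : a < 1) (hb0 : 0 < b) (hb1 : b < 1)
    (w : ℕ → ℝ) (hw : ∀ x, w x = (a ^ 2) ^ (x + 1) * (1 - (b ^ 2) ^ (x + 1)))
    (P : ℕ → Polynomial ℝ) (h : ℕ → ℝ) (hmon : ∀ k, (P k).Monic)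
    (hdeg : ∀ k, (P k).natDegree = k)
    (horth : ∀ j k : ℕ, ∑' l : ℕ, (P j).eval ((l : ℝ) + 1) * (P k).eval ((l : ℝ) + 1) * w l =
      if j = k then h k else 0) (k : ℕ) :
    h k ≤ (Nat.factorial k : ℝ) ^ 2 * (a ^ 2) ^ (k + 1) / (1 - a ^ 2) ^ (2 * k + 1) ∧
    (Nat.factorial k : ℝ) ^ 2 * (a ^ 2) ^ (k + 1) / (1 - a ^ 2) ^ (2 * k + 1) ≤
      h k * (1 + b ^ 2 / (1 - b ^ 2) * (((a + b) / (1 + a * b)) ^ 2) ^ k) := by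
  obtain ⟨m, hm0, hmd, hmc, hmr⟩ := nc_exists_meixner (a ^ 2)
  set q : ℝ := a ^ 2 with hq
  set s : ℝ := b ^ 2 with hs
  have hq0 : 0 < q := by positivity
  have hs0 : 0 < s := by positivity
  have hq1 : q < 1 := by rw [hq]; nlinarith
  have hs1 : s < 1 := by rw [hs]; nlinarith
  have hq' : 0 < 1 - q := by linarith
  have hs' : 0 < 1 - s := by linarith
  have hqs : q * s < q := by nlinarith
  have hspow : ∀ x : ℕ, s ^ (x + 1) < 1 := fun x => pow_lt_one₀ hs0.le hs1 (by omega)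
  have hwpos : ∀ x, 0 < w x := by
    intro x
    rw [hw]
    exact mul_pos (by positivity) (by linarith [hspow x])
  have hwle : ∀ x, w x ≤ q * q ^ x := by
    intro x
    rw [hw, pow_succ']
    have : 0 < s ^ (x + 1) := by positivity
    have : 0 < q * q ^ x := by positivity
    nlinarith
  -- summability
  have hsum : ∀ A B : Polynomial ℝ,
      Summable fun l : ℕ => A.eval ((l : ℝ) + 1) * B.eval ((l : ℝ) + 1) * w l := by
    intro A B
    have h1 := nc_summable q hq0.le hq1 (Polynomial.taylor 1 (A * B))
    refine Summable.of_norm_bounded (h1.norm.mul_left q) ?_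
    intro l
    rw [Polynomial.taylor_eval, Polynomial.eval_mul]
    rw [norm_mul, norm_mul (_ * _) (q ^ l), Real.norm_of_nonneg (hwpos l).le,
      Real.norm_of_nonneg (show 0 ≤ q ^ l by positivity)]
    calc _ ≤ ‖A.eval ((l : ℝ) + 1) * B.eval ((l : ℝ) + 1)‖ * (q * q ^ l) := by
          gcongr; exact hwle l
      _ = _ := by ring
  -- norms of `m`
  have hnorm1 : ∀ X, ∑ x ∈ range X, (m k).eval (x : ℝ) ^ 2 * q ^ x ≤ (1 / q) ^ k / (1 - q) := by
    intro X
    have := nc_norm a 1 ha0 ha1 one_pos le_rfl (fun n x => (m n).eval (x : ℝ))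
      (by simp [hm0]) hmr k X
    have e : (a + 1) / (1 + a * 1) = 1 := by rw [mul_one, add_comm]; exact div_self (by positivity)
    rw [e] at this
    simpa [pow_mul, hq] using this
  have hnorm2 : ∀ X, ∑ x ∈ range X, (m k).eval (x : ℝ) ^ 2 * (q * s) ^ x ≤
      (((a + b) / (1 + a * b)) ^ 2 / q) ^ k / (1 - q * s) := by
    intro X
    have := nc_norm a b ha0 ha1 hb0 hb1.le (fun n x => (m n).eval (x : ℝ))
      (by simp [hm0]) hmr k X
    simpa [pow_mul, hq, hs, mul_pow] using this
  have hk : h k = ∑' l : ℕ, (P k).eval ((l : ℝ) + 1) * (P k).eval ((l : ℝ) + 1) * w l := by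
    rw [horth]; simp
  constructor
  · -- upper bound
    have hlow : ∀ n, n ≤ k → ∀ D : Polynomial ℝ, D.degree < n →
        ∑' l : ℕ, D.eval ((l : ℝ) + 1) * (P k).eval ((l : ℝ) + 1) * w l = 0 := by
      intro n
      induction n with
      | zero =>
        intro _ D hD
        have : D = 0 := by
          rw [← Polynomial.degree_eq_bot]
          simpa using hD
        simp [this]
      | succ n ih =>
        intro hn D hD
        set E := D - Polynomial.C (D.coeff n) * P n with hE
        have hEd : E.degree < n := by
          rw [Polynomial.degree_lt_iff_coeff_zero]
          intro i hi
          rw [Polynomial.degree_lt_iff_coeff_zero] at hD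
          rw [hE, Polynomial.coeff_sub, Polynomial.coeff_C_mul]
          rcases eq_or_lt_of_le hi with rfl | hi
          · have : (P n).coeff n = 1 := by
              have := (hmon n).coeff_natDegree
              rwa [hdeg] at this
            rw [this]; ring
          · rw [hD i (by omega), Polynomial.coeff_eq_zero_of_natDegree_lt (p := P n)
              (by rw [hdeg]; omega)]; ring
        have h1 := ih (by omega) E hEd
        have h2 := horth n k
        rw [if_neg (by omega)] at h2
        have h3 : (fun l : ℕ => D.eval ((l : ℝ) + 1) * (P k).eval ((l : ℝ) + 1) * w l) =
          fun l : ℕ => E.eval ((l : ℝ) + 1) * (P k).eval ((l : ℝ) + 1) * w l +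
            D.coeff n * ((P n).eval ((l : ℝ) + 1) * (P k).eval ((l : ℝ) + 1) * w l) := by
          ext l; simp [hE]; ring
        rw [h3, (hsum _ _).tsum_add ((hsum _ _).mul_left _), h1, tsum_mul_left, h2]; simp
    set c : ℝ := (m k).coeff k with hc
    have hc0 : c ≠ 0 := by
      rw [hc, hmc]
      have : 1 - 1 / q ≠ 0 := by
        have : 1 < 1 / q := by rw [lt_div_iff₀ hq0]; linarith
        linarith
      positivity
    set Q : Polynomial ℝ := Polynomial.C (1 / c) * Polynomial.taylor (-1) (m k) with hQ
    have hQe : ∀ l : ℕ, Q.eval ((l : ℝ) + 1) = 1 / c * (m k).eval (l : ℝ) := by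
      intro l; rw [hQ, Polynomial.eval_mul, Polynomial.taylor_eval]; simp
    have hmk : (m k).natDegree = k := by
      apply le_antisymm (hmd k)
      exact Polynomial.le_natDegree_of_ne_zero hc0
    have hQD : (Q - P k).degree < k := by
      rw [Polynomial.degree_lt_iff_coeff_zero]
      intro i hi
      rw [hQ, Polynomial.coeff_sub, Polynomial.coeff_C_mul]
      rcases eq_or_lt_of_le hi with rfl | hi
      · have e1 : (P k).coeff k = 1 := by
          have := (hmon k).coeff_natDegree
          rwa [hdeg] at this
        have e2 : (Polynomial.taylor (-1) (m k)).coeff k = c := by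
          have := Polynomial.coeff_taylor_natDegree (-1) (m k)
          rwa [Polynomial.leadingCoeff, hmk] at this
        rw [e1, e2]; field_simp; ring
      · rw [Polynomial.coeff_eq_zero_of_natDegree_lt (p := P k) (by rw [hdeg]; omega),
          Polynomial.coeff_eq_zero_of_natDegree_lt
            (by rw [Polynomial.natDegree_taylor, hmk]; omega)]; ring
    have h1 := hlow k le_rfl _ hQD
    have h2 : h k ≤ ∑' l : ℕ, Q.eval ((l : ℝ) + 1) * Q.eval ((l : ℝ) + 1) * w l := by
      have e : (fun l : ℕ => Q.eval ((l : ℝ) + 1) * Q.eval ((l : ℝ) + 1) * w l) = fun l : ℕ =>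
          ((P k).eval ((l : ℝ) + 1) * (P k).eval ((l : ℝ) + 1) * w l +
          2 * ((Q - P k).eval ((l : ℝ) + 1) * (P k).eval ((l : ℝ) + 1) * w l)) +
          (Q - P k).eval ((l : ℝ) + 1) * (Q - P k).eval ((l : ℝ) + 1) * w l := by
        ext l; simp; ring
      rw [e, ((hsum _ _).add ((hsum _ _).mul_left _)).tsum_add (hsum _ _),
        (hsum _ _).tsum_add ((hsum _ _).mul_left _), tsum_mul_left, h1, ← hk]
      have : 0 ≤ ∑' l : ℕ, (Q - P k).eval ((l : ℝ) + 1) * (Q - P k).eval ((l : ℝ) + 1) * w l :=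
        tsum_nonneg fun l => mul_nonneg (mul_self_nonneg _) (hwpos l).le
      linarith
    refine h2.trans ?_
    have h3 : ∑' l : ℕ, Q.eval ((l : ℝ) + 1) * Q.eval ((l : ℝ) + 1) * w l ≤
        (1 / c) ^ 2 * q * ((1 / q) ^ k / (1 - q)) := by
      apply Real.tsum_le_of_sum_range_le
      · intro l; exact mul_nonneg (mul_self_nonneg _) (hwpos l).le
      · intro X
        refine le_trans ?_ (mul_le_mul_of_nonneg_left (hnorm1 X) (by positivity))
        rw [Finset.mul_sum]
        apply Finset.sum_le_sum
        intro l _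
        rw [hQe]
        calc _ ≤ 1 / c * (m k).eval (l : ℝ) * (1 / c * (m k).eval (l : ℝ)) * (q * q ^ l) := by
              apply mul_le_mul_of_nonneg_left (hwle l) (mul_self_nonneg _)
          _ = _ := by ring
    refine h3.trans (le_of_eq ?_)
    rw [hc, hmc]
    have e1 : (1 - 1 / q) = -(1 - q) / q := by field_simp; ring
    have e2 : ((1 - 1 / q) ^ k) ^ 2 = (1 - q) ^ (2 * k) / q ^ (2 * k) := by
      rw [← pow_mul, mul_comm k 2, pow_mul, e1, div_pow, neg_sq, div_pow, pow_mul, pow_mul]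
    rw [div_pow, div_pow, e2, div_pow 1 q, one_pow, one_pow]
    field_simp
    ring
  · -- lower bound
    set σ : ℝ := ((a + b) / (1 + a * b)) ^ 2 with hσ
    have hσ0 : 0 ≤ σ := sq_nonneg _
    set δ : ℝ := s / (1 - s) * σ ^ k with hδ
    set B : ℝ := (1 / q) * ((1 / q) ^ k / (1 - q)) * (1 + δ) with hB
    have hδ0 : 0 ≤ δ := by positivity
    have hB0 : 0 < B := by positivity
    -- the pairing
    have hpair := nc_orth q hq0 hq1 m hm0 hmr k (Polynomial.taylor 1 (P k))
      (by rw [Polynomial.natDegree_taylor, hdeg])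
    rw [nc_taylor_top _ _ (hdeg k).le, show (P k).coeff k = 1 by
      have := (hmon k).coeff_natDegree
      rwa [hdeg] at this] at hpair
    have hps : Summable fun x : ℕ => (Polynomial.taylor 1 (P k)).eval (x : ℝ) *
        (m k).eval (x : ℝ) * q ^ x := by
      simpa using nc_summable q hq0.le hq1 (Polynomial.taylor 1 (P k) * m k)
    have hBX : ∀ X, ∑ x ∈ range X, ((m k).eval (x : ℝ) * q ^ x) ^ 2 / w x ≤ B := by
      intro X
      have h1 : ∑ x ∈ range X, ((m k).eval (x : ℝ) * q ^ x) ^ 2 / w x ≤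
          (1 / q) * (∑ x ∈ range X, (m k).eval (x : ℝ) ^ 2 * q ^ x +
            s / (1 - s) * ∑ x ∈ range X, (m k).eval (x : ℝ) ^ 2 * (q * s) ^ x) := by
        rw [Finset.mul_sum, ← Finset.sum_add_distrib, Finset.mul_sum]
        apply Finset.sum_le_sum
        intro x _
        have hx := hspow x
        have e1 : s ^ (x + 1) ≤ s := by
          rw [pow_succ]
          have : s ^ x ≤ 1 := pow_le_one₀ hs0.le hs1.le
          nlinarith
        have e2 : 1 / (1 - s ^ (x + 1)) ≤ 1 + s / (1 - s) * s ^ x := by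
          have e3 : 1 / (1 - s ^ (x + 1)) = 1 + s ^ (x + 1) / (1 - s ^ (x + 1)) := by
            have : 1 - s ^ (x + 1) ≠ 0 := by linarith
            field_simp
            ring
          have e4 : s ^ (x + 1) / (1 - s ^ (x + 1)) ≤ s ^ (x + 1) / (1 - s) := by
            gcongr
          rw [e3, show s / (1 - s) * s ^ x = s ^ (x + 1) / (1 - s) by ring]
          linarith
        calc ((m k).eval (x : ℝ) * q ^ x) ^ 2 / w x
            = (1 / q) * ((m k).eval (x : ℝ) ^ 2 * q ^ x) * (1 / (1 - s ^ (x + 1))) := by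
              rw [hw]
              have : 1 - s ^ (x + 1) ≠ 0 := by linarith
              field_simp
              ring
          _ ≤ (1 / q) * ((m k).eval (x : ℝ) ^ 2 * q ^ x) * (1 + s / (1 - s) * s ^ x) := by
              gcongr
          _ = _ := by rw [mul_pow]; ring
      refine h1.trans ?_
      rw [hB, mul_assoc]
      apply mul_le_mul_of_nonneg_left _ (by positivity)
      have h2 : (σ / q) ^ k / (1 - q * s) ≤ (σ / q) ^ k / (1 - q) := by
        gcongr
      have h3 := (hnorm2 X).trans h2
      have h4 := mul_le_mul_of_nonneg_left h3 (show 0 ≤ s / (1 - s) by positivity)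
      have h5 : (1 / q) ^ k / (1 - q) * (1 + δ) = (1 / q) ^ k / (1 - q) +
          s / (1 - s) * ((σ / q) ^ k / (1 - q)) := by
        rw [hδ, div_pow, div_pow, one_pow]; field_simp
      rw [h5]
      exact add_le_add (hnorm1 X) h4
    have hCS : ∀ X, (∑ x ∈ range X, (Polynomial.taylor 1 (P k)).eval (x : ℝ) *
        (m k).eval (x : ℝ) * q ^ x) ^ 2 ≤ h k * B := by
      intro X
      have h1 := Finset.sum_sq_le_sum_mul_sum_of_sq_le_mul (range X)
        (r := fun x : ℕ => (Polynomial.taylor 1 (P k)).eval (x : ℝ) *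
          (m k).eval (x : ℝ) * q ^ x)
        (f := fun x : ℕ => (P k).eval ((x : ℝ) + 1) * (P k).eval ((x : ℝ) + 1) * w x)
        (g := fun x : ℕ => ((m k).eval (x : ℝ) * q ^ x) ^ 2 / w x)
        (fun x _ => mul_nonneg (mul_self_nonneg _) (hwpos x).le)
        (fun x _ => div_nonneg (sq_nonneg _) (hwpos x).le)
        (fun x _ => by
          have := (hwpos x).ne'
          simp only [Polynomial.taylor_eval]
          apply le_of_eq
          field_simp)
      refine h1.trans ?_
      have h2 : ∑ x ∈ range X, (P k).eval ((x : ℝ) + 1) * (P k).eval ((x : ℝ) + 1) * w x ≤ h k := by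
        rw [hk]
        exact (hsum _ _).sum_le_tsum _ (fun x _ => mul_nonneg (mul_self_nonneg _) (hwpos x).le)
      have h3 : 0 ≤ h k := by
        rw [hk]; exact tsum_nonneg (fun x => mul_nonneg (mul_self_nonneg _) (hwpos x).le)
      exact mul_le_mul h2 (hBX X)
        (Finset.sum_nonneg fun x _ => div_nonneg (sq_nonneg _) (hwpos x).le) h3
    have hlim := (hps.hasSum.tendsto_sum_nat).pow 2
    have hfin := le_of_tendsto' hlim hCS
    rw [hpair] at hfin
    have e1 : (1 * ((-1) ^ k * (Nat.factorial k : ℝ) / (1 - q) ^ (k + 1))) ^ 2 =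
        (Nat.factorial k : ℝ) ^ 2 / (1 - q) ^ (2 * k + 2) := by
      rw [one_mul, div_pow, mul_pow, ← pow_mul, mul_comm k 2, pow_mul]
      norm_num
      ring
    rw [e1] at hfin
    have e2 : (Nat.factorial k : ℝ) ^ 2 * q ^ (k + 1) / (1 - q) ^ (2 * k + 1) =
        (Nat.factorial k : ℝ) ^ 2 / (1 - q) ^ (2 * k + 2) * (q ^ (k + 1) * (1 - q)) := by
      field_simp
      ring
    rw [e2]
    refine (mul_le_mul_of_nonneg_right hfin (by positivity)).trans (le_of_eq ?_)
    rw [hB, div_pow, one_pow]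
    field_simp
    ring

/-- Exponential decay beats the stretched exponential. -/
lemma nc_decay (ε : ℝ) (hε0 : 0 < ε) (σ : ℝ) (h0 : 0 < σ) (h1 : σ < 1) :
    ∃ M : ℝ, 0 < M ∧ ∀ k : ℕ, σ ^ k ≤ M * Real.exp (-(k : ℝ) ^ (1 - ε)) := by
  have hl : Real.log σ < 0 := Real.log_neg h0 h1
  have ht := (tendsto_rpow_neg_atTop hε0).comp (tendsto_natCast_atTop_atTop (R := ℝ))
  have hb' := (ht.eventually_lt_const (show 0 < -Real.log σ by linarith)).and
    (eventually_gt_atTop 0)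
  obtain ⟨N, hN⟩ := eventually_atTop.1 hb'
  refine ⟨∑ k ∈ range N, σ ^ k * Real.exp ((k : ℝ) ^ (1 - ε)) + 1, ?_, ?_⟩
  · have : 0 ≤ ∑ k ∈ range N, σ ^ k * Real.exp ((k : ℝ) ^ (1 - ε)) :=
      Finset.sum_nonneg fun k _ => by positivity
    linarith
  · intro k
    rw [Real.exp_neg, ← div_eq_mul_inv, le_div_iff₀ (Real.exp_pos _)]
    rcases lt_or_ge k N with hk | hk
    · have := Finset.single_le_sum (f := fun k : ℕ => σ ^ k * Real.exp ((k : ℝ) ^ (1 - ε)))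
        (fun k _ => by positivity) (Finset.mem_range.2 hk)
      linarith
    · have h2 := hN k hk
      obtain ⟨h2, hk0⟩ := h2
      have hk0' : (0 : ℝ) < k := by exact_mod_cast hk0
      simp only [Function.comp_apply] at h2
      have h5 : (k : ℝ) ^ (1 - ε) = k * (k : ℝ) ^ (-ε) := by
        rw [sub_eq_add_neg, Real.rpow_add hk0', Real.rpow_one]
      have h6 := mul_lt_mul_of_pos_left h2 hk0'
      rw [← h5] at h6
      have h3 : σ ^ k = Real.exp (k * Real.log σ) := by
        rw [mul_comm, Real.exp_mul, Real.exp_log h0, Real.rpow_natCast]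
      have h4 : σ ^ k * Real.exp ((k : ℝ) ^ (1 - ε)) ≤ 1 := by
        rw [h3, ← Real.exp_add, Real.exp_le_one_iff]; linarith
      have : 0 ≤ ∑ k ∈ range N, σ ^ k * Real.exp ((k : ℝ) ^ (1 - ε)) :=
        Finset.sum_nonneg fun k _ => by positivity
      linarith


/-- **Theorem (asymptotics of the norming constants).**
For every `ε ∈ (0,1)` and every compact subset `K` of `{(t,γ) : 0 < γ < t}`, there is an
`M > 0` such that for all `(t,γ) ∈ K` and all `k ≥ 1` the norming constants `h k` of the
monic orthogonal polynomials for the weight `w` satisfy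
`|h k (1-q)^{2k+1} / ((k!)² q^{k+1}) - 1| ≤ M e^{-k^{1-ε}}`, where `q = e^{2γ-2t}`. -/
theorem norming_constant_asymptotics
    (ε : ℝ) (hε0 : 0 < ε) (hε1 : ε < 1)
    (K : Set (ℝ × ℝ)) (hKcpt : IsCompact K)
    (hKsub : K ⊆ {p : ℝ × ℝ | 0 < p.2 ∧ p.2 < p.1}) :
    ∃ M : ℝ, 0 < M ∧
      ∀ t γ : ℝ, (t, γ) ∈ K →
        ∀ (P : ℕ → Polynomial ℝ) (h : ℕ → ℝ),
          (∀ k, (P k).Monic) →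
          (∀ k, (P k).natDegree = k) →
          (∀ j k : ℕ,
            ∑' l : ℕ, (P j).eval ((l : ℝ) + 1) * (P k).eval ((l : ℝ) + 1) *
              ferroWeight t γ ((l : ℝ) + 1) = if j = k then h k else 0) →
          ∀ k : ℕ, 1 ≤ k →
            |h k * (1 - Real.exp (2 * γ - 2 * t)) ^ (2 * k + 1) /
                ((Nat.factorial k : ℝ) ^ 2 * Real.exp (2 * γ - 2 * t) ^ (k + 1)) - 1| ≤
              M * Real.exp (-(k : ℝ) ^ (1 - ε)) := by
  rcases K.eq_empty_or_nonempty with rfl | hKne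
  · exact ⟨1, one_pos, fun t γ hK => absurd hK (Set.notMem_empty _)⟩
  have ha0 : ∀ p : ℝ × ℝ, 0 < Real.exp (p.2 - p.1) := fun p => Real.exp_pos _
  have hb0 : ∀ p : ℝ × ℝ, 0 < Real.exp (-2 * p.2) := fun p => Real.exp_pos _
  have ha1 : ∀ p ∈ K, Real.exp (p.2 - p.1) < 1 := by
    intro p hp
    rw [Real.exp_lt_one_iff]
    have := (hKsub hp).2
    linarith
  have hb1 : ∀ p ∈ K, Real.exp (-2 * p.2) < 1 := by
    intro p hp
    rw [Real.exp_lt_one_iff]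
    have := (hKsub hp).1
    linarith
  let F : ℝ × ℝ → ℝ := fun p => ((Real.exp (p.2 - p.1) + Real.exp (-2 * p.2)) /
    (1 + Real.exp (p.2 - p.1) * Real.exp (-2 * p.2))) ^ 2
  let G : ℝ × ℝ → ℝ := fun p => Real.exp (-2 * p.2) ^ 2 / (1 - Real.exp (-2 * p.2) ^ 2)
  have hF : ContinuousOn F K := by
    apply Continuous.continuousOn
    apply Continuous.pow
    apply Continuous.div (by fun_prop) (by fun_prop)
    intro p
    have := mul_pos (ha0 p) (hb0 p)
    linarith
  have hGden : ∀ p ∈ K, 0 < 1 - Real.exp (-2 * p.2) ^ 2 := by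
    intro p hp
    have h1 := hb1 p hp
    have h2 := hb0 p
    nlinarith
  have hG : ContinuousOn G K := by
    apply ContinuousOn.div (by fun_prop) (by fun_prop)
    intro p hp
    exact (hGden p hp).ne'
  obtain ⟨p0, hp0, hmax⟩ := hKcpt.exists_isMaxOn hKne hF
  obtain ⟨p1, hp1, hmax1⟩ := hKcpt.exists_isMaxOn hKne hG
  have hF0 : 0 < F p0 := by
    have h1 := ha0 p0
    have h2 := hb0 p0
    positivity
  have hF1 : F p0 < 1 := by
    have h1 := ha0 p0
    have h2 := hb0 p0
    have h3 := ha1 p0 hp0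
    have h4 := hb1 p0 hp0
    apply pow_lt_one₀ (by positivity) _ two_ne_zero
    rw [div_lt_one (by positivity)]
    nlinarith
  obtain ⟨M, hM, hdec⟩ := nc_decay ε hε0 (F p0) hF0 hF1
  have hG0 : 0 < G p1 := div_pos (pow_pos (hb0 p1) 2) (hGden p1 hp1)
  refine ⟨G p1 * M, mul_pos hG0 hM, ?_⟩
  intro t γ hK P h hmon hdeg horth k _
  set a : ℝ := Real.exp (γ - t) with ha
  set b : ℝ := Real.exp (-2 * γ) with hb
  have hqa : Real.exp (2 * γ - 2 * t) = a ^ 2 := by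
    rw [ha, ← Real.exp_nat_mul]; congr 1; push_cast; ring
  have ha1' : a < 1 := ha1 (t, γ) hK
  have hb1' : b < 1 := hb1 (t, γ) hK
  have ha0' : 0 < a := Real.exp_pos _
  have hb0' : 0 < b := Real.exp_pos _
  obtain ⟨hup, hlo⟩ := nc_core a b ha0' ha1' hb0' hb1'
    (fun l : ℕ => ferroWeight t γ ((l : ℝ) + 1)) (by
      intro x
      simp only [ferroWeight]
      rw [Real.sinh_eq, mul_sub, mul_one, ← mul_pow, ha, hb]
      simp only [← Real.exp_nat_mul, ← Real.exp_add]
      have e : 2 * Real.exp (-2 * t * ((x : ℝ) + 1)) *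
          ((Real.exp (2 * γ * ((x : ℝ) + 1)) - Real.exp (-(2 * γ * ((x : ℝ) + 1)))) / 2) =
          Real.exp (-2 * t * ((x : ℝ) + 1) + 2 * γ * ((x : ℝ) + 1)) -
          Real.exp (-2 * t * ((x : ℝ) + 1) + -(2 * γ * ((x : ℝ) + 1))) := by
        rw [Real.exp_add, Real.exp_add]; ring
      rw [e]
      congr 1 <;> congr 1 <;> push_cast <;> ring) P h hmon hdeg horth k
  rw [hqa]
  set H : ℝ := (Nat.factorial k : ℝ) ^ 2 * (a ^ 2) ^ (k + 1) / (1 - a ^ 2) ^ (2 * k + 1) with hH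
  have hq' : 0 < 1 - a ^ 2 := by nlinarith
  have hHpos : 0 < H := by positivity
  have e1 : h k * (1 - a ^ 2) ^ (2 * k + 1) / ((Nat.factorial k : ℝ) ^ 2 * (a ^ 2) ^ (k + 1)) =
      h k / H := by
    rw [hH, div_div_eq_mul_div]
  rw [e1]
  set δ : ℝ := b ^ 2 / (1 - b ^ 2) * (((a + b) / (1 + a * b)) ^ 2) ^ k with hδ
  have hb' : 0 < 1 - b ^ 2 := by nlinarith
  have hδ0 : 0 ≤ δ := by positivity
  have hδle : δ ≤ G p1 * (M * Real.exp (-(k : ℝ) ^ (1 - ε))) := by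
    have g1 : b ^ 2 / (1 - b ^ 2) ≤ G p1 := hmax1 hK
    have g2 : ((a + b) / (1 + a * b)) ^ 2 ≤ F p0 := hmax hK
    exact mul_le_mul g1 ((pow_le_pow_left₀ (by positivity) g2 k).trans (hdec k))
      (by positivity) hG0.le
  rw [mul_assoc]
  refine le_trans ?_ hδle
  have hle : h k / H ≤ 1 := (div_le_one hHpos).2 hup
  rw [abs_le]
  constructor
  · have h1 : 1 ≤ h k / H * (1 + δ) := by
      rw [div_mul_eq_mul_div, le_div_iff₀ hHpos]; linarith
    nlinarith
  · linarith
end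

section
/- For fixed t > γ > 0 there exists a constant C > 0 (depending on t and γ) such that for every ε ∈ (0,1) there exists M > 0 with |Z_n / (F^{n²} G^n) − C| ≤ M e^{−n^{1−ε}} for all n ≥ 1, where F = sinh(t+γ) and G = e^{γ−t}. That is, Z_n = C F^{n²} G^n (1 + O(e^{−n^{1−ε}})) as n → ∞. -/
open Real Filter Finset

/-- `φ(s) = sinh(2γ)/(sinh(s+γ) sinh(s-γ))`. -/
noncomputable def phiSV (γ s : ℝ) : ℝ :=
  Real.sinh (2 * γ) / (Real.sinh (s + γ) * Real.sinh (s - γ))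

/-- The Hankel determinant `τ_n = det(φ^{(j+k-2)}(t))_{1 ≤ j,k ≤ n}`. -/
noncomputable def tauSV (n : ℕ) (t γ : ℝ) : ℝ :=
  Matrix.det (Matrix.of fun j k : Fin n => iteratedDeriv ((j : ℕ) + (k : ℕ)) (phiSV γ) t)

/-- Izergin's formula for the partition function of the six-vertex model with DWBC,
ferroelectric parametrization. -/
noncomputable def ZSV (n : ℕ) (t γ : ℝ) : ℝ :=
  (Real.sinh (t - γ) * Real.sinh (t + γ)) ^ (n ^ 2) * tauSV n t γ /
    (∏ j ∈ Finset.range n, (Nat.factorial j : ℝ)) ^ 2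

/-- Meixner polynomial (β = 1). -/
noncomputable def mxn (κ : ℝ) (n l : ℕ) : ℝ :=
  ∑ i ∈ range (n + 1), (n.choose i : ℝ) * (l.choose i : ℝ) * κ ^ i

lemma mxn_ext (κ : ℝ) (n l N : ℕ) (h : n + 1 ≤ N) :
    mxn κ n l = ∑ i ∈ range N, (n.choose i : ℝ) * (l.choose i : ℝ) * κ ^ i := by
  unfold mxn
  apply Finset.sum_subset
  · intro i; simp only [Finset.mem_range]; omega
  · intro i _ hi
    have : n.choose i = 0 := Nat.choose_eq_zero_of_lt (by simp only [Finset.mem_range] at hi; omega)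
    simp [this]

lemma mxn_rec (κ : ℝ) (n l : ℕ) :
    mxn κ (n + 1) (l + 1) = mxn κ n (l + 1) + mxn κ (n + 1) l + (κ - 1) * mxn κ n l := by
  have e1 : mxn κ (n + 1) (l + 1) - mxn κ n (l + 1) - mxn κ (n + 1) l + mxn κ n l
      = κ * mxn κ n l := by
    rw [mxn_ext κ (n+1) (l+1) (n+2) (by omega), mxn_ext κ n (l+1) (n+2) (by omega),
      mxn_ext κ (n+1) l (n+2) (by omega)]
    nth_rewrite 1 [mxn_ext κ n l (n+2) (by omega)]
    rw [← Finset.sum_sub_distrib, ← Finset.sum_sub_distrib, ← Finset.sum_add_distrib,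
      Finset.sum_range_succ', mxn, Finset.mul_sum]
    simp only [Nat.choose_zero_right, Nat.cast_one, Nat.choose_succ_succ, Nat.cast_add]
    simp only [pow_zero, mul_one, sub_self, zero_sub, neg_add_cancel, add_zero]
    apply Finset.sum_congr rfl
    intro i _
    ring
  linarith

lemma mxn_zero_left (κ : ℝ) (l : ℕ) : mxn κ 0 l = 1 := by simp [mxn]
lemma mxn_zero_right (κ : ℝ) (n : ℕ) : mxn κ n 0 = 1 := by
  rw [mxn, Finset.sum_range_succ']; simp

lemma mxn_bound (κ α β : ℝ) (hα : 1 ≤ α) (hβ : 1 ≤ β) (hκ : κ ≤ 1)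
    (h : 1 + (1 - κ) ≤ (α - 1) * (β - 1)) (n l : ℕ) : |mxn κ n l| ≤ α ^ n * β ^ l := by
  induction n generalizing l with
  | zero => simp [mxn_zero_left, one_le_pow₀ hβ]
  | succ n ih =>
    induction l with
    | zero => simp [mxn_zero_right, one_le_pow₀ hα]
    | succ l ihl =>
      rw [mxn_rec]
      have h1 := ih (l + 1)
      have h2 := ih l
      have h3 : |(κ - 1) * mxn κ n l| ≤ (1 - κ) * (α ^ n * β ^ l) := by
        rw [abs_mul, abs_of_nonpos (by linarith : κ - 1 ≤ 0), neg_sub]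
        exact mul_le_mul_of_nonneg_left h2 (by linarith)
      have hp : 0 ≤ α ^ n * β ^ l := by positivity
      calc _ ≤ |mxn κ n (l + 1)| + |mxn κ (n + 1) l| + |(κ - 1) * mxn κ n l| := abs_add_three _ _ _
        _ ≤ α ^ n * β ^ (l + 1) + α ^ (n+1) * β ^ l + (1 - κ) * (α ^ n * β ^ l) := by linarith
        _ = (α ^ n * β ^ l) * (β + α + (1 - κ)) := by ring
        _ ≤ (α ^ n * β ^ l) * (α * β) := by
            apply mul_le_mul_of_nonneg_left _ hp; nlinarith
        _ = _ := by ring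

lemma mxn_summable (q : ℝ) (hq0 : 0 < q) (hq1 : q < 1) (j k : ℕ) :
    Summable (fun l : ℕ => q ^ l * (mxn (1 - 1 / q) j l * mxn (1 - 1 / q) k l)) := by
  obtain ⟨β, hβ1, hβ⟩ : ∃ β : ℝ, 1 < β ∧ q * β ^ 2 < 1 := by
    refine ⟨1 + (1 - q) / 4, by linarith, by nlinarith [mul_pos hq0 (sub_pos.2 hq1)]⟩
  obtain ⟨α, hα1, hα⟩ : ∃ α : ℝ, 1 ≤ α ∧ 1 + (1 - (1 - 1 / q)) ≤ (α - 1) * (β - 1) := by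
    refine ⟨1 + (1 + (1 - (1 - 1 / q))) / (β - 1), ?_, ?_⟩
    · have : 0 ≤ (1 + (1 - (1 - 1 / q))) / (β - 1) := by
        apply div_nonneg _ (by linarith)
        have := one_div_pos.2 hq0
        linarith
      linarith
    · rw [add_sub_cancel_left, div_mul_cancel₀ _ (by linarith)]
  have hb := mxn_bound (1 - 1 / q) α β hα1 hβ1.le (by have := one_div_pos.2 hq0; linarith) hα
  refine Summable.of_norm_bounded (g := fun l => (α ^ j * α ^ k) * (q * β ^ 2) ^ l)
    ((summable_geometric_of_lt_one (by positivity) hβ).mul_left _) ?_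
  intro l
  rw [norm_mul, norm_mul, Real.norm_eq_abs, Real.norm_eq_abs, Real.norm_eq_abs,
    abs_of_pos (pow_pos hq0 l)]
  calc _ ≤ q ^ l * ((α ^ j * β ^ l) * (α ^ k * β ^ l)) := by
        gcongr
        · exact hb j l
        · exact hb k l
    _ = _ := by rw [mul_pow]; ring

/-- Orthogonality. -/
lemma mxn_orth (q : ℝ) (hq0 : 0 < q) (hq1 : q < 1) (j k : ℕ) :
    (∑' l : ℕ, q ^ l * (mxn (1 - 1 / q) j l * mxn (1 - 1 / q) k l)) =
      if j = k then 1 / (q ^ j * (1 - q)) else 0 := by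
  set κ := 1 - 1 / q with hκ
  have hs := mxn_summable q hq0 hq1
  have hq1' : 1 - q ≠ 0 := by linarith
  rw [← hκ] at hs
  set S : ℕ → ℕ → ℝ := fun j k => ∑' l : ℕ, q ^ l * (mxn κ j l * mxn κ k l) with hS
  have hsum : ∀ j k, HasSum (fun l : ℕ => q ^ l * (mxn κ j l * mxn κ k l)) (S j k) :=
    fun j k => (hs j k).hasSum
  have hsh : ∀ j k, HasSum (fun l : ℕ => q ^ (l + 1) * (mxn κ j (l+1) * mxn κ k (l+1)))
      (S j k - 1) := by
    intro j k
    have := (hasSum_nat_add_iff' (f := fun l : ℕ => q ^ l * (mxn κ j l * mxn κ k l)) 1).2 (hsum j k)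
    simpa [mxn_zero_right] using this
  have symm : ∀ j k, S j k = S k j := by
    intro j k; simp only [hS]; congr 1; ext l; ring
  have hr : ∀ n l, mxn κ (n+1) (l+1) - mxn κ n (l+1) = mxn κ (n+1) l - 1 / q * mxn κ n l := by
    intro n l; rw [mxn_rec]; rw [hκ]; ring
  have h00 : S 0 0 = 1 / (1 - q) := by
    simp only [hS, mxn_zero_left, mul_one]
    rw [tsum_geometric_of_lt_one hq0.le hq1, one_div]
  have h0 : ∀ j, S (j+1) 0 = 0 := by
    intro j
    have a1 := (hsh (j+1) 0).sub (hsh j 0)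
    have a2 := ((hsum (j+1) 0).sub ((hsum j 0).mul_left (1/q))).mul_left q
    have := a1.unique (by
      refine (congrArg (fun f : ℕ → ℝ => HasSum f _) (funext fun l => ?_)).mpr a2
      have := hr j l
      simp only [mxn_zero_left, mul_one]
      rw [← mul_sub, this]; ring)
    have e : q * (S (j+1) 0 - 1 / q * S j 0) = q * S (j+1) 0 - S j 0 := by field_simp
    rw [e] at this
    have : S (j+1) 0 * (1 - q) = 0 := by linarith
    simpa [hq1'] using this
  have hstep : ∀ j k, S (j+1) (k+1) = S j k / q := by
    intro j k
    have a1 := (((hsh (j+1) (k+1)).sub (hsh j (k+1))).sub (hsh (j+1) k)).add (hsh j k)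
    have a2 := ((((hsum (j+1) (k+1)).sub ((hsum j (k+1)).mul_left (1/q))).sub
      ((hsum (j+1) k).mul_left (1/q))).add ((hsum j k).mul_left (1/q^2))).mul_left q
    have := a1.unique (by
      refine (congrArg (fun f : ℕ → ℝ => HasSum f _) (funext fun l => ?_)).mpr a2
      have h1 := hr j l
      have h2 := hr k l
      have : q ^ (l+1) * ((mxn κ (j+1) (l+1) - mxn κ j (l+1)) * (mxn κ (k+1) (l+1) - mxn κ k (l+1)))
        = q ^ (l+1) * ((mxn κ (j+1) l - 1 / q * mxn κ j l) * (mxn κ (k+1) l - 1 / q * mxn κ k l)) := by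
        rw [h1, h2]
      have hq := hq0.ne'
      ring_nf at this ⊢
      linarith)
    have e : q * (S (j+1) (k+1) - 1 / q * S j (k+1) - 1 / q * S (j+1) k + 1/q^2 * S j k)
      = q * S (j+1) (k+1) - S j (k+1) - S (j+1) k + S j k / q := by field_simp
    rw [e] at this
    have h3 : (S (j+1) (k+1) - S j k / q) * (1 - q) = 0 := by
      have : S j k / q * q = S j k := by field_simp
      linarith
    have := (mul_eq_zero.1 h3).resolve_right hq1'
    linarith
  change S j k = _
  induction j generalizing k with
  | zero =>
    cases k with
    | zero => simp [h00]
    | succ k => rw [symm, h0]; simp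
  | succ j ih =>
    cases k with
    | zero => simp [h0]
    | succ k =>
      rw [hstep, ih]
      by_cases h : j = k
      · subst h; simp [pow_succ]; field_simp
      · simp [h]

lemma seq_lim (D : ℕ → ℝ) (K ρ : ℝ) (hK : 0 ≤ K) (hρ0 : 0 < ρ) (hρ1 : ρ < 1) (hD : ∀ n, 0 < D n)
    (hanti : ∀ n, D (n + 1) ≤ D n) (hlow : ∀ n, D n * (1 - K * ρ ^ n) ≤ D (n + 1)) :
    ∃ C : ℝ, 0 < C ∧ ∃ K' : ℝ, 0 < K' ∧ ∀ n, |D n - C| ≤ K' * ρ ^ n := by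
  have anti : Antitone D := antitone_nat_of_succ_le hanti
  have hbdd : BddBelow (Set.range D) := ⟨0, by rintro _ ⟨n, rfl⟩; exact (hD n).le⟩
  have hlim := tendsto_atTop_ciInf anti hbdd
  set C := ⨅ i, D i
  have hge : ∀ n, C ≤ D n := fun n => ciInf_le hbdd n
  have h1ρ : 0 < 1 - ρ := by linarith
  have key : ∀ N, D N - D N * (K / (1 - ρ)) * ρ ^ N ≤ C := by
    intro N
    set E : ℕ → ℝ := fun m => D (N + m) - D N * (K / (1 - ρ)) * ρ ^ (N + m) with hE
    have mono : Monotone E := by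
      apply monotone_nat_of_le_succ
      intro m
      have h1 := hlow (N + m)
      have h2 : D (N + m) ≤ D N := anti (by omega)
      have h3 : D (N + m) * (K * ρ ^ (N + m)) ≤ D N * (K * ρ ^ (N + m)) := by gcongr
      have h4 : D N * (K / (1 - ρ)) * ρ ^ (N + m) - D N * (K / (1 - ρ)) * ρ ^ (N + (m + 1))
        = D N * (K * ρ ^ (N + m)) := by
        rw [← add_assoc, pow_succ]; field_simp
      simp only [hE]
      rw [← add_assoc] at h4 ⊢
      linarith
    have hEl : Tendsto E atTop (nhds C) := by
      have t1 : Tendsto (fun m => D (N + m)) atTop (nhds C) := by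
        have := (tendsto_add_atTop_iff_nat N).2 hlim
        simpa [add_comm] using this
      have t2 : Tendsto (fun m => ρ ^ (N + m)) atTop (nhds 0) := by
        have := (tendsto_add_atTop_iff_nat N).2 (tendsto_pow_atTop_nhds_zero_of_lt_one hρ0.le hρ1)
        simpa [add_comm] using this
      simpa using t1.sub (t2.const_mul (D N * (K / (1 - ρ))))
    have := mono.ge_of_tendsto hEl 0
    simpa [hE] using this
  have hC : 0 < C := by
    have t : Tendsto (fun N => (K / (1 - ρ)) * ρ ^ N) atTop (nhds 0) := by
      simpa using (tendsto_pow_atTop_nhds_zero_of_lt_one hρ0.le hρ1).const_mul (K / (1 - ρ))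
    obtain ⟨N, hN⟩ := (t.eventually_lt_const (show (0:ℝ) < 1 by norm_num)).exists
    have := key N
    have h2 : 0 < D N * (1 - (K / (1 - ρ)) * ρ ^ N) := mul_pos (hD N) (by linarith)
    linarith
  refine ⟨C, hC, D 0 * (K / (1 - ρ)) + 1, ?_, ?_⟩
  · have := hD 0; positivity
  · intro n
    rw [abs_of_nonneg (by linarith [hge n])]
    have h1 := key n
    have h2 : D n ≤ D 0 := anti (by omega)
    have h3 : D n * (K / (1 - ρ)) * ρ ^ n ≤ D 0 * (K / (1 - ρ)) * ρ ^ n := by gcongr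
    have : 0 < ρ ^ n := by positivity
    linarith

lemma exp_rate (ρ ε : ℝ) (hρ0 : 0 < ρ) (hρ1 : ρ < 1) (hε : 0 < ε) (hε1 : ε < 1) :
    ∃ M : ℝ, 0 < M ∧ ∀ n : ℕ, 1 ≤ n → ρ ^ n ≤ M * Real.exp (-(n : ℝ) ^ (1 - ε)) := by
  set c := -Real.log ρ with hc
  have hc0 : 0 < c := by have := Real.log_neg hρ0 hρ1; linarith
  set N := (1 / c) ^ (1 / ε)
  refine ⟨Real.exp N, Real.exp_pos _, ?_⟩
  intro n hn
  have hn0 : (1:ℝ) ≤ n := by exact_mod_cast hn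
  have : ρ ^ n = Real.exp (-(c * n)) := by
    rw [hc, neg_mul, neg_neg, mul_comm, Real.exp_nat_mul, Real.exp_log hρ0]
  rw [this, ← Real.exp_add, Real.exp_le_exp]
  have hN : 0 < N := by positivity
  suffices (n:ℝ) ^ (1 - ε) ≤ c * n + N by linarith
  by_cases h : (n : ℝ) ≤ N
  · have : (n:ℝ) ^ (1 - ε) ≤ (n:ℝ) ^ (1:ℝ) := Real.rpow_le_rpow_of_exponent_le hn0 (by linarith)
    rw [Real.rpow_one] at this
    have : 0 < c * n := by positivity
    linarith
  · push Not at h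
    have h1 : 1 / c ≤ (n:ℝ) ^ ε := by
      have := Real.rpow_le_rpow hN.le h.le hε.le
      rw [← Real.rpow_mul (by positivity), one_div_mul_cancel hε.ne', Real.rpow_one] at this
      exact this
    have h2 : (n:ℝ) ^ (1 - ε) = n / (n:ℝ) ^ ε := by
      rw [Real.rpow_sub (by positivity), Real.rpow_one]
    have h3 : 0 < (n:ℝ) ^ ε := by positivity
    rw [h2]
    have : n / (n:ℝ) ^ ε ≤ c * n := by
      rw [div_le_iff₀ h3]
      rw [div_le_iff₀ hc0] at h1
      nlinarith
    linarith

/-- Compression of the multiplication operator. -/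
noncomputable def opA (U : ℕ → ℕ → ℝ) (r : ℝ) (j k : ℕ) : ℝ := ∑' l, U j l * U k l * r ^ (l + 1)

lemma opA_summable (U : ℕ → ℕ → ℝ) (r : ℝ) (hr0 : 0 < r) (hr1 : r < 1)
    (hs : ∀ j k, Summable fun l => U j l * U k l) (j k : ℕ) :
    Summable fun l => U j l * U k l * r ^ (l + 1) := by
  refine Summable.of_norm_bounded (hs j k).norm ?_
  intro l
  rw [norm_mul]
  apply mul_le_of_le_one_right (norm_nonneg _)
  rw [Real.norm_of_nonneg (by positivity)]
  exact pow_le_one₀ hr0.le hr1.le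

lemma opA_symm (U : ℕ → ℕ → ℝ) (r : ℝ) (j k : ℕ) : opA U r j k = opA U r k j := by
  unfold opA; congr 1; funext l; ring

lemma opA_quad (U : ℕ → ℕ → ℝ) (r : ℝ) (hr0 : 0 < r) (hr1 : r < 1)
    (hs : ∀ j k, Summable fun l => U j l * U k l)
    (ho : ∀ j k, ∑' l, U j l * U k l = if j = k then 1 else 0)
    (n : ℕ) (x : Fin n → ℝ) :
    (∑ j, ∑ k, x j * x k * opA U r j k) ≤ r * ∑ j, x j ^ 2 := by
  have h1 : HasSum (fun l => ∑ j : Fin n, ∑ k : Fin n, x j * x k * (U j l * U k l * r ^ (l + 1)))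
      (∑ j, ∑ k, x j * x k * opA U r j k) := by
    apply hasSum_sum; intro j _
    apply hasSum_sum; intro k _
    exact (opA_summable U r hr0 hr1 hs j k).hasSum.mul_left _
  have h2 : HasSum (fun l => r * ∑ j : Fin n, ∑ k : Fin n, x j * x k * (U j l * U k l))
      (r * ∑ j : Fin n, ∑ k : Fin n, x j * x k * (if (j:ℕ) = k then 1 else 0)) := by
    apply HasSum.mul_left
    apply hasSum_sum; intro j _
    apply hasSum_sum; intro k _
    apply HasSum.mul_left
    rw [← ho]
    exact (hs j k).hasSum
  have e2 : (∑ j : Fin n, ∑ k : Fin n, x j * x k * (if (j:ℕ) = k then (1:ℝ) else 0))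
      = ∑ j, x j ^ 2 := by
    apply Finset.sum_congr rfl
    intro j _
    simp [← Fin.ext_iff, sq]
  rw [e2] at h2
  refine hasSum_le ?_ h1 h2
  intro l
  have a1 : (∑ j : Fin n, ∑ k : Fin n, x j * x k * (U j l * U k l)) = (∑ j : Fin n, x j * U j l)^2 := by
    rw [sq, Finset.sum_mul_sum]
    apply Finset.sum_congr rfl; intro j _; apply Finset.sum_congr rfl; intro k _; ring
  have a2 : (∑ j : Fin n, ∑ k : Fin n, x j * x k * (U j l * U k l * r ^ (l+1)))
      = r ^ (l+1) * (∑ j : Fin n, x j * U j l)^2 := by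
    rw [← a1, Finset.mul_sum]
    apply Finset.sum_congr rfl; intro j _
    rw [Finset.mul_sum]
    apply Finset.sum_congr rfl; intro k _; ring
  rw [a1, a2]
  gcongr
  calc r ^ (l+1) ≤ r ^ 1 := pow_le_pow_of_le_one hr0.le hr1.le (by omega)
    _ = r := pow_one r

lemma opA_diag_nonneg (U : ℕ → ℕ → ℝ) (r : ℝ) (hr0 : 0 < r) (j : ℕ) : 0 ≤ opA U r j j := by
  apply tsum_nonneg; intro l; have := mul_self_nonneg (U j l); positivity

/-- Cauchy-Schwarz. -/
lemma opA_cs (U : ℕ → ℕ → ℝ) (r : ℝ) (hr0 : 0 < r) (hr1 : r < 1)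
    (hs : ∀ j k, Summable fun l => U j l * U k l) (j k : ℕ) :
    opA U r j k ^ 2 ≤ opA U r j j * opA U r k k := by
  have hq : ∀ y : ℝ, 0 ≤ opA U r j j * (y * y) + (2 * opA U r j k) * y + opA U r k k := by
    intro y
    have S := opA_summable U r hr0 hr1 hs
    have h := (((S j j).hasSum.mul_right (y*y)).add (((S j k).hasSum.mul_left 2).mul_right y)).add
      (S k k).hasSum
    refine h.nonneg ?_
    intro l
    have : U j l * U j l * r ^ (l + 1) * (y * y) + 2 * (U j l * U k l * r ^ (l + 1)) * y
      + U k l * U k l * r ^ (l + 1) = (U j l * y + U k l)^2 * r ^ (l+1) := by ring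
    rw [this]
    positivity
  have := discrim_le_zero hq
  unfold discrim at this
  linarith

/-- The compressed matrix `1 - A_n`. -/
noncomputable def matB (U : ℕ → ℕ → ℝ) (r : ℝ) (n : ℕ) : Matrix (Fin n) (Fin n) ℝ :=
  Matrix.of fun j k => (if j = k then 1 else 0) - opA U r j k

lemma matB_quad (U : ℕ → ℕ → ℝ) (r : ℝ) (hr0 : 0 < r) (hr1 : r < 1)
    (hs : ∀ j k, Summable fun l => U j l * U k l)
    (ho : ∀ j k, ∑' l, U j l * U k l = if j = k then 1 else 0)
    (n : ℕ) (x : Fin n → ℝ) :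
    (1 - r) * ∑ j, x j ^ 2 ≤ dotProduct x ((matB U r n).mulVec x) := by
  have h := opA_quad U r hr0 hr1 hs ho n x
  have e : dotProduct x ((matB U r n).mulVec x) =
      ∑ j, x j ^ 2 - ∑ j, ∑ k, x j * x k * opA U r j k := by
    simp only [dotProduct, Matrix.mulVec, matB, Matrix.of_apply]
    rw [← Finset.sum_sub_distrib]
    apply Finset.sum_congr rfl
    intro j _
    simp only [sub_mul, Finset.sum_sub_distrib, ite_mul, one_mul, zero_mul,
      Finset.sum_ite_eq, Finset.mem_univ, if_true, mul_sub, Finset.mul_sum]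
    congr 1
    · ring
    · apply Finset.sum_congr rfl; intro k _; ring
  rw [e]; linarith

lemma matB_det_pos (U : ℕ → ℕ → ℝ) (r : ℝ) (hr0 : 0 < r) (hr1 : r < 1)
    (hs : ∀ j k, Summable fun l => U j l * U k l)
    (ho : ∀ j k, ∑' l, U j l * U k l = if j = k then 1 else 0)
    (n : ℕ) : 0 < (matB U r n).det := by
  apply Matrix.PosDef.det_pos
  apply Matrix.PosDef.of_dotProduct_mulVec_pos
  · ext j k
    simp only [matB, Matrix.conjTranspose_apply, Matrix.of_apply, star_trivial]
    rw [opA_symm]; simp [eq_comm]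
  · intro x hx
    rw [star_trivial]
    refine lt_of_lt_of_le ?_ (matB_quad U r hr0 hr1 hs ho n x)
    apply mul_pos (by linarith)
    obtain ⟨i, hi⟩ := Function.ne_iff.1 hx
    exact Finset.sum_pos' (fun i _ => sq_nonneg _) ⟨i, Finset.mem_univ _, by
      have : x i ≠ 0 := hi
      positivity⟩

lemma matB_schur (U : ℕ → ℕ → ℝ) (r : ℝ) (n : ℕ) (hdet : (matB U r n).det ≠ 0) :
    ∃ x : Fin n → ℝ, (matB U r n).mulVec x = (fun j : Fin n => opA U r j n) ∧
    (matB U r (n+1)).det = (matB U r n).det *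
      (1 - opA U r n n - dotProduct x (fun j : Fin n => opA U r j n)) := by
  let _ : Invertible (matB U r n) := Matrix.invertibleOfIsUnitDet _ (isUnit_iff_ne_zero.2 hdet)
  set a : Fin n → ℝ := fun j : Fin n => opA U r j n with ha
  refine ⟨(⅟(matB U r n)).mulVec a, by rw [Matrix.mulVec_mulVec, mul_invOf_self, Matrix.one_mulVec], ?_⟩
  have hb : (matB U r (n+1)).submatrix finSumFinEquiv finSumFinEquiv =
      Matrix.fromBlocks (matB U r n) (Matrix.of fun j (_ : Fin 1) => - a j)
        (Matrix.of fun (_ : Fin 1) j => - a j)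
        (Matrix.of fun (_ : Fin 1) (_ : Fin 1) => 1 - opA U r n n) := by
    ext i j
    rcases i with i | i <;> rcases j with j | j
    · simp [matB]
    · have : (Fin.castSucc i) ≠ Fin.last n := (Fin.castSucc_lt_last i).ne
      simp [matB, ha, Fin.ext_iff, i.2.ne]
    · have : (Fin.castSucc j) ≠ Fin.last n := (Fin.castSucc_lt_last j).ne
      simp [matB, ha, Fin.ext_iff, opA_symm U r n j, j.2.ne']
    · simp [matB, Subsingleton.elim i j]
  rw [← Matrix.det_submatrix_equiv_self finSumFinEquiv (matB U r (n+1)), hb,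
    Matrix.det_fromBlocks₁₁, Matrix.det_fin_one]
  congr 1
  rw [Matrix.sub_apply, Matrix.mul_assoc, Matrix.mul_apply]
  congr 1
  simp only [dotProduct, Matrix.of_apply, Matrix.mul_apply, Matrix.mulVec]
  apply Finset.sum_congr rfl
  intro j _
  simp [mul_comm]

lemma matB_step (U : ℕ → ℕ → ℝ) (r : ℝ) (hr0 : 0 < r) (hr1 : r < 1)
    (hs : ∀ j k, Summable fun l => U j l * U k l)
    (ho : ∀ j k, ∑' l, U j l * U k l = if j = k then 1 else 0)
    (K ρ : ℝ) (hK : 0 ≤ K) (hρ0 : 0 < ρ) (hρ1 : ρ < 1) (hd : ∀ n, opA U r n n ≤ K * ρ ^ n)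
    (n : ℕ) : (matB U r (n+1)).det ≤ (matB U r n).det ∧
      (matB U r n).det * (1 - (K + K * K / (1 - ρ) / (1 - r)) * ρ ^ n) ≤ (matB U r (n+1)).det := by
  have hpos := matB_det_pos U r hr0 hr1 hs ho n
  obtain ⟨x, hx, hdet⟩ := matB_schur U r n hpos.ne'
  set a : Fin n → ℝ := fun j : Fin n => opA U r j n with ha
  have hq := matB_quad U r hr0 hr1 hs ho n x
  rw [hx] at hq
  have hx2 : 0 ≤ ∑ j, x j ^ 2 := Finset.sum_nonneg fun i _ => sq_nonneg _
  have h1r : 0 < 1 - r := by linarith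
  have h1ρ : 0 < 1 - ρ := by linarith
  have hnn := opA_diag_nonneg U r hr0 n
  have hxa : 0 ≤ dotProduct x a := le_trans (by positivity) hq
  have hcs : (dotProduct x a) ^ 2 ≤ (∑ j, x j ^ 2) * ∑ j, a j ^ 2 :=
    Finset.sum_mul_sq_le_sq_mul_sq _ _ _
  have ha2 : ∑ j, a j ^ 2 ≤ K * K / (1 - ρ) * ρ ^ n := by
    calc ∑ j, a j ^ 2 ≤ ∑ j : Fin n, (K * ρ ^ (j:ℕ)) * (K * ρ ^ n) := by
          apply Finset.sum_le_sum
          intro j _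
          refine (opA_cs U r hr0 hr1 hs j n).trans ?_
          exact mul_le_mul (hd j) (hd n) hnn (by positivity)
      _ = K * K * ρ ^ n * ∑ j ∈ range n, ρ ^ j := by
          rw [Finset.sum_range, Finset.mul_sum]
          apply Finset.sum_congr rfl; intro j _; ring
      _ ≤ K * K * ρ ^ n * (1 / (1 - ρ)) := by
          gcongr
          rw [one_div, ← tsum_geometric_of_lt_one hρ0.le hρ1]
          exact (summable_geometric_of_lt_one hρ0.le hρ1).sum_le_tsum _ (fun i _ => by positivity)
      _ = _ := by ring
  have ha0 : 0 ≤ ∑ j, a j ^ 2 := Finset.sum_nonneg fun i _ => sq_nonneg _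
  have hfin : dotProduct x a ≤ (∑ j, a j ^ 2) / (1 - r) := by
    rw [le_div_iff₀ h1r]
    rcases hxa.eq_or_lt with h0 | h0
    · rw [← h0]; simpa using ha0
    · have : dotProduct x a * (dotProduct x a * (1 - r)) ≤ dotProduct x a * ∑ j, a j ^ 2 := by
        nlinarith
      exact le_of_mul_le_mul_left this h0
  have hfin2 : dotProduct x a ≤ K * K / (1 - ρ) / (1 - r) * ρ ^ n := by
    refine hfin.trans ?_
    rw [div_le_iff₀ h1r]
    refine ha2.trans (le_of_eq ?_)
    field_simp
  rw [hdet]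
  constructor
  · apply mul_le_of_le_one_right hpos.le; linarith
  · apply mul_le_mul_of_nonneg_left _ hpos.le
    have := hd n
    linarith

/-- Terms of the series for the `k`-th derivative of `φ`. -/
noncomputable def serG (γ : ℝ) (k m : ℕ) (s : ℝ) : ℝ :=
  2 * (Real.exp (2 * (m + 1) * γ) - Real.exp (-(2 * (m + 1) * γ))) * (-2 * (m + 1)) ^ k *
    Real.exp (-2 * (m + 1) * s)

lemma serG_deriv (γ : ℝ) (k m : ℕ) (s : ℝ) :
    HasDerivAt (serG γ k m) (serG γ (k + 1) m s) s := by
  have h : HasDerivAt (fun s : ℝ => Real.exp (-2 * (m + 1) * s))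
      (Real.exp (-2 * (m + 1) * s) * (-2 * (m + 1))) s := by
    have := ((hasDerivAt_id s).const_mul (-2 * ((m:ℝ) + 1))).exp
    simpa using this
  have := h.const_mul (2 * (Real.exp (2 * (m + 1) * γ) - Real.exp (-(2 * (m + 1) * γ))) * (-2 * ((m:ℝ) + 1)) ^ k)
  refine this.congr_deriv ?_
  unfold serG; rw [pow_succ]; ring

/-- Majorant. -/
noncomputable def serU (γ a : ℝ) (k m : ℕ) : ℝ :=
  2 * 2 ^ k * (((m + 1 : ℕ) : ℝ) ^ k * Real.exp (-2 * (a - γ)) ^ (m + 1))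

lemma serU_summable (γ a : ℝ) (k : ℕ) (h : γ < a) : Summable (serU γ a k) := by
  unfold serU
  apply Summable.mul_left
  have := summable_pow_mul_geometric_of_norm_lt_one (R := ℝ) k (r := Real.exp (-2 * (a - γ))) (by
    rw [Real.norm_of_nonneg (Real.exp_pos _).le, Real.exp_lt_one_iff]; linarith)
  exact (summable_nat_add_iff 1).2 this

lemma serG_bound (γ a s : ℝ) (hγ : 0 < γ) (k m : ℕ) (h : a ≤ s) :
    ‖serG γ k m s‖ ≤ serU γ a k m := by
  unfold serG serU
  have e1 : Real.exp (-(2 * (m + 1) * γ)) ≤ Real.exp (2 * (m + 1) * γ) := by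
    rw [Real.exp_le_exp]
    have : 0 < 2 * ((m:ℝ) + 1) * γ := by positivity
    linarith
  have e2 := Real.exp_pos (-(2 * (m + 1) * γ))
  rw [norm_mul, norm_mul, norm_pow, Real.norm_of_nonneg (Real.exp_pos _).le,
    Real.norm_of_nonneg (by linarith), norm_mul, norm_neg,
    Real.norm_of_nonneg (by positivity : (0:ℝ) ≤ (m:ℝ) + 1), Real.norm_of_nonneg (by norm_num : (0:ℝ) ≤ 2)]
  calc _ ≤ 2 * Real.exp (2 * (m + 1) * γ) * (2 * ((m:ℝ) + 1)) ^ k * Real.exp (-2 * (m + 1) * a) := by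
        gcongr ?_ * _ * ?_
        · linarith
        · rw [Real.exp_le_exp]
          have : 2 * ((m:ℝ)+1) * a ≤ 2 * ((m:ℝ)+1) * s := by gcongr
          linarith
    _ = 2 * (2 * ((m:ℝ) + 1)) ^ k * (Real.exp (2 * (m + 1) * γ) * Real.exp (-2 * (m + 1) * a)) := by ring
    _ = 2 * (2 * ((m:ℝ) + 1)) ^ k * Real.exp (-2 * (a - γ)) ^ (m + 1) := by
        rw [← Real.exp_add, ← Real.exp_nat_mul]
        congr 2
        push_cast
        ring
    _ = _ := by rw [mul_pow]; push_cast; ring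

lemma serG_summable (γ s : ℝ) (hγ : 0 < γ) (hs : γ < s) (k : ℕ) :
    Summable (fun m => serG γ k m s) :=
  Summable.of_norm_bounded (serU_summable γ s k hs) (fun m => serG_bound γ s s hγ k m le_rfl)

lemma phi_series (γ s : ℝ) (hγ : 0 < γ) (hs : γ < s) : phiSV γ s = ∑' m, serG γ 0 m s := by
  set u := Real.exp (-(s - γ)) with hu
  set v := Real.exp (-(s + γ)) with hv
  have u0 : 0 < u := Real.exp_pos _
  have v0 : 0 < v := Real.exp_pos _
  have u1 : u < 1 := by rw [hu, Real.exp_lt_one_iff]; linarith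
  have v1 : v < 1 := by rw [hv, Real.exp_lt_one_iff]; linarith
  have u2 : u ^ 2 < 1 := by nlinarith
  have v2 : v ^ 2 < 1 := by nlinarith
  have hterm : ∀ m : ℕ, serG γ 0 m s = 2 * u^2 * (u ^ 2) ^ m - 2 * v^2 * (v ^ 2) ^ m := by
    intro m
    have a1 : u^2 * (u ^ 2) ^ m = Real.exp (2 * (m + 1) * γ) * Real.exp (-2 * (m + 1) * s) := by
      rw [← pow_succ', ← pow_mul, hu, ← Real.exp_nat_mul, ← Real.exp_add]
      congr 1; push_cast; ring
    have a2 : v^2 * (v ^ 2) ^ m = Real.exp (-(2 * (m + 1) * γ)) * Real.exp (-2 * (m + 1) * s) := by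
      rw [← pow_succ', ← pow_mul, hv, ← Real.exp_nat_mul, ← Real.exp_add]
      congr 1; push_cast; ring
    unfold serG
    rw [mul_assoc 2 (u ^ 2), mul_assoc 2 (v ^ 2), a1, a2]; ring
  have hsum : HasSum (fun m => serG γ 0 m s) (2 * u^2 * (1 - u^2)⁻¹ - 2 * v^2 * (1 - v^2)⁻¹) := by
    simp_rw [hterm]
    exact ((hasSum_geometric_of_lt_one (by positivity) u2).mul_left _).sub
      ((hasSum_geometric_of_lt_one (by positivity) v2).mul_left _)
  rw [hsum.tsum_eq]
  have s1 : Real.sinh (s - γ) = (u⁻¹ - u) / 2 := by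
    rw [Real.sinh_eq, hu, ← Real.exp_neg, neg_neg]
  have s2 : Real.sinh (s + γ) = (v⁻¹ - v) / 2 := by
    rw [Real.sinh_eq, hv, ← Real.exp_neg, neg_neg]
  have s3 : Real.sinh (2 * γ) = (u * v⁻¹ - v * u⁻¹) / 2 := by
    rw [Real.sinh_eq, hu, hv, ← Real.exp_neg, ← Real.exp_neg, ← Real.exp_add, ← Real.exp_add]
    ring_nf
  unfold phiSV
  rw [s1, s2, s3]
  have d1 : 1 - u ^ 2 ≠ 0 := by linarith
  have d2 : 1 - v ^ 2 ≠ 0 := by linarith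
  have c1 : u⁻¹ - u = (1 - u^2) / u := by field_simp
  have c2 : v⁻¹ - v = (1 - v^2) / v := by field_simp
  rw [c1, c2]
  field_simp
  ring

lemma phi_iter (γ : ℝ) (hγ : 0 < γ) (k : ℕ) : ∀ s, γ < s →
    iteratedDeriv k (phiSV γ) s = ∑' m, serG γ k m s := by
  induction k with
  | zero => intro s hs; rw [iteratedDeriv_zero]; exact phi_series γ s hγ hs
  | succ k ih =>
    intro s hs
    rw [iteratedDeriv_succ]
    have hev : iteratedDeriv k (phiSV γ) =ᶠ[nhds s] fun z => ∑' m, serG γ k m z := by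
      filter_upwards [Ioi_mem_nhds hs] with z hz using ih z hz
    rw [hev.deriv_eq]
    apply HasDerivAt.deriv
    refine hasDerivAt_tsum_of_isPreconnected (u := serU γ ((s + γ) / 2) (k+1)) (t := Set.Ioi ((s + γ) / 2))
      (y₀ := s) (serU_summable _ _ _ (by linarith)) isOpen_Ioi isPreconnected_Ioi
      (fun m y _ => serG_deriv γ k m y) ?_ ?_ (serG_summable γ s hγ hs k) ?_
    · intro m y hy; exact serG_bound _ _ _ hγ _ _ (le_of_lt hy)
    · simp only [Set.mem_Ioi]; linarith
    · simp only [Set.mem_Ioi]; linarith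

lemma opA_diag_bound (p r : ℝ) (hp0 : 0 < p) (hp1 : p < 1) (hr0 : 0 < r) (hr1 : r < 1)
    (U : ℕ → ℕ → ℝ)
    (hU : ∀ j l, U j l = √(1 - p ^ 2) * p ^ j * p ^ l * mxn (1 - 1 / p ^ 2) j l)
    (hs : ∀ j k, Summable fun l => U j l * U k l)
    (ho : ∀ j k, ∑' l, U j l * U k l = if j = k then 1 else 0) :
    ∃ K ρ : ℝ, 0 ≤ K ∧ 0 < ρ ∧ ρ < 1 ∧ ∀ n, opA U r n n ≤ K * ρ ^ n := by
  have hq1 : p ^ 2 < 1 := by nlinarith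
  have hiq : 0 < 1 / p ^ 2 := by positivity
  set α := (1 + p) / (2 * p) with hα
  have hα1 : 1 < α := by rw [hα, lt_div_iff₀ (by positivity)]; linarith
  have hpα : p * α = (1 + p) / 2 := by rw [hα]; field_simp
  set β := 1 + (1 + (1 - (1 - 1 / p ^ 2))) / (α - 1) with hβ
  have hβ1 : 1 ≤ β := by
    have : 0 ≤ (1 + (1 - (1 - 1 / p ^ 2))) / (α - 1) := div_nonneg (by linarith) (by linarith)
    linarith
  have hαβ : 1 + (1 - (1 - 1 / p ^ 2)) ≤ (α - 1) * (β - 1) := by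
    rw [hβ, add_sub_cancel_left, mul_div_cancel₀ _ (by linarith)]
  have hb := mxn_bound (1 - 1 / p ^ 2) α β hα1.le hβ1 (by linarith) hαβ
  set σ := ((1 + p) / 2) ^ 2 with hσ
  have hσ0 : 0 < σ := by positivity
  have hσ1 : σ < 1 := by rw [hσ]; nlinarith
  -- squared bound
  have hU2 : ∀ n l, U n l * U n l ≤ σ ^ n * ((p * β) ^ 2) ^ l := by
    intro n l
    have h1 : mxn (1 - 1 / p ^ 2) n l ^ 2 ≤ (α ^ n * β ^ l) ^ 2 := by
      rw [← sq_abs]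
      exact pow_le_pow_left₀ (abs_nonneg _) (hb n l) 2
    have e : U n l * U n l = (1 - p^2) * ((p ^ n * p ^ l) ^ 2 * mxn (1 - 1 / p ^ 2) n l ^ 2) := by
      rw [hU]
      have := Real.mul_self_sqrt (by linarith : 0 ≤ 1 - p ^ 2)
      calc _ = (√(1 - p^2) * √(1 - p^2)) * ((p ^ n * p ^ l) ^ 2 * mxn (1 - 1 / p ^ 2) n l ^ 2) := by ring
        _ = _ := by rw [this]
    rw [e]
    calc _ ≤ 1 * ((p ^ n * p ^ l) ^ 2 * (α ^ n * β ^ l) ^ 2) := by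
          gcongr
          have : 0 < p ^ 2 := by positivity
          linarith
      _ = ((p * α) ^ 2) ^ n * ((p * β) ^ 2) ^ l := by ring
      _ = _ := by rw [hpα]
  have hβ0 : 0 < (p * β) ^ 2 := by positivity
  obtain ⟨m0, hm0⟩ := exists_pow_lt_of_lt_one (show 0 < 1 / (2 * (p * β)^2) by positivity) hr1
  set m := m0 + 1 with hm
  have hmr : (p * β) ^ 2 * r ^ m ≤ 1 / 2 := by
    have : r ^ m ≤ 1 / (2 * (p * β)^2) := by
      refine le_trans ?_ hm0.le
      exact pow_le_pow_of_le_one hr0.le hr1.le (by omega)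
    calc _ ≤ (p * β) ^ 2 * (1 / (2 * (p * β)^2)) := by gcongr
      _ = 1 / 2 := by field_simp
  have hmpos : (1:ℝ) ≤ m := by rw [hm]; push_cast; have : (0:ℝ) ≤ m0 := by positivity
                               linarith
  set η := 1 - (1 - σ) / (2 * m) with hη
  have hδ0 : 0 < (1 - σ) / (2 * m) := div_pos (by linarith) (by positivity)
  have hδ1 : (1 - σ) / (2 * m) < 1 := by rw [div_lt_one (by positivity)]; linarith
  have hη0 : 0 < η := by linarith
  have hη1 : η < 1 := by linarith
  have hηm : σ < η ^ m := by
    have := one_add_mul_le_pow (show (-2:ℝ) ≤ -((1 - σ) / (2 * m)) by linarith) m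
    rw [← sub_eq_add_neg, ← hη] at this
    have e : (m:ℝ) * -((1 - σ) / (2 * m)) = -((1 - σ) / 2) := by field_simp
    rw [e] at this
    linarith
  set θ := σ / η ^ m with hθ
  have hθ0 : 0 < θ := by positivity
  have hθ1 : θ < 1 := by rw [hθ, div_lt_one (by positivity)]; exact hηm
  refine ⟨3, max η θ, by norm_num, lt_max_of_lt_left hη0, max_lt hη1 hθ1, ?_⟩
  intro n
  have hpt : ∀ l : ℕ, r ^ (l + 1) ≤ η ^ n + (r ^ m) ^ l / (η ^ m) ^ n := by
    intro l
    have h1 : r ^ (l+1) ≤ r ^ l := pow_le_pow_of_le_one hr0.le hr1.le (by omega)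
    rcases le_total (r ^ l) (η ^ n) with h | h
    · have : 0 ≤ (r ^ m) ^ l / (η ^ m) ^ n := by positivity
      linarith
    · have h2 : (η ^ m) ^ n ≤ (r ^ m) ^ l := by
        rw [pow_right_comm, pow_right_comm r]
        exact pow_le_pow_left₀ (by positivity) h m
      have h3 : 1 ≤ (r ^ m) ^ l / (η ^ m) ^ n := by
        rw [le_div_iff₀ (by positivity)]; linarith
      have h4 : r ^ l ≤ 1 := pow_le_one₀ hr0.le hr1.le
      have : 0 < η ^ n := by positivity
      linarith
  have H1 := (opA_summable U r hr0 hr1 hs n n).hasSum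
  have H2 : HasSum (fun l => η ^ n * (U n l * U n l)) (η ^ n * 1) := by
    apply HasSum.mul_left
    have := (hs n n).hasSum
    rwa [ho, if_pos rfl] at this
  have H3 : HasSum (fun l : ℕ => θ ^ n * (1 / 2 : ℝ) ^ l) (θ ^ n * 2) := by
    apply HasSum.mul_left
    exact hasSum_geometric_two
  have := hasSum_le (fun l => ?_) H1 (H2.add H3)
  · refine this.trans ?_
    have i1 : η ^ n ≤ max η θ ^ n := pow_le_pow_left₀ hη0.le (le_max_left _ _) n
    have i2 : θ ^ n ≤ max η θ ^ n := pow_le_pow_left₀ hθ0.le (le_max_right _ _) n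
    linarith
  · have hnn : 0 ≤ U n l * U n l := mul_self_nonneg _
    calc U n l * U n l * r ^ (l+1)
        ≤ U n l * U n l * (η ^ n + (r ^ m) ^ l / (η ^ m) ^ n) := by gcongr; exact hpt l
      _ = η ^ n * (U n l * U n l) + U n l * U n l * ((r ^ m) ^ l / (η ^ m) ^ n) := by ring
      _ ≤ η ^ n * (U n l * U n l) + (σ ^ n * ((p * β) ^ 2) ^ l) * ((r ^ m) ^ l / (η ^ m) ^ n) := by
          have h5 : 0 ≤ (r ^ m) ^ l / (η ^ m) ^ n := by positivity
          have h6 := mul_le_mul_of_nonneg_right (hU2 n l) h5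
          linarith
      _ = η ^ n * (U n l * U n l) + θ ^ n * ((p * β) ^ 2 * r ^ m) ^ l := by
          rw [hθ, div_pow, mul_pow ((p * β) ^ 2)]; ring
      _ ≤ _ := by gcongr

open Polynomial in
lemma gram_det (w x : ℕ → ℝ) (hw : ∀ k : ℕ, Summable fun m => w m * x m ^ k) (n : ℕ)
    (P : Fin n → ℝ[X]) (hP : ∀ i, (P i).natDegree ≤ i) :
    (Matrix.of fun j k : Fin n => ∑' m, w m * ((P j).eval (x m) * (P k).eval (x m))).det =
    (∏ j : Fin n, (P j).coeff j) ^ 2 *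
      (Matrix.of fun j k : Fin n => ∑' m, w m * x m ^ ((j:ℕ) + (k:ℕ))).det := by
  set T : Matrix (Fin n) (Fin n) ℝ := Matrix.of fun i j => (P j).coeff i with hT
  set H := Matrix.of fun j k : Fin n => ∑' m, w m * x m ^ ((j:ℕ) + (k:ℕ)) with hH
  have hdT : T.det = ∏ j : Fin n, (P j).coeff j :=
    Matrix.det_of_isUpperTriangular (Matrix.matrixOfPolynomials_blockTriangular P hP)
  have hev : ∀ j : Fin n, ∀ y : ℝ, (P j).eval y = ∑ i : Fin n, T i j * y ^ (i:ℕ) := by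
    intro j y
    rw [Polynomial.eval_eq_sum_range' (lt_of_le_of_lt (hP j) j.2), Finset.sum_range]
    rfl
  have hmain : (Matrix.of fun j k : Fin n => ∑' m, w m * ((P j).eval (x m) * (P k).eval (x m)))
      = T.transpose * H * T := by
    ext j k
    rw [Matrix.of_apply, Matrix.mul_apply]
    apply HasSum.tsum_eq
    have : HasSum (fun m => ∑ i' : Fin n, (∑ i : Fin n, T i j * (w m * x m ^ ((i:ℕ) + (i':ℕ)))) * T i' k)
       (∑ i' : Fin n, (∑ i : Fin n, T i j * H i i') * T i' k) := by
      apply hasSum_sum; intro i' _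
      apply HasSum.mul_right
      apply hasSum_sum; intro i _
      apply HasSum.mul_left
      exact (hw _).hasSum
    have e : (fun m => w m * ((P j).eval (x m) * (P k).eval (x m))) =
        (fun m => ∑ i' : Fin n, (∑ i : Fin n, T i j * (w m * x m ^ ((i:ℕ) + (i':ℕ)))) * T i' k) := by
      funext m
      rw [hev, hev, Finset.sum_mul_sum, Finset.sum_comm, Finset.mul_sum]
      apply Finset.sum_congr rfl; intro i _
      rw [Finset.mul_sum, Finset.sum_mul]
      apply Finset.sum_congr rfl; intro i' _
      rw [pow_add]; ring
    rw [e]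
    simpa [Matrix.mul_apply] using this
  rw [hmain, Matrix.det_mul, Matrix.det_mul, Matrix.det_transpose, hdT]
  ring

open Polynomial in
/-- The Meixner polynomial as a polynomial. -/
noncomputable def mxP (κ : ℝ) (n : ℕ) : ℝ[X] :=
  ∑ i ∈ range (n + 1), C ((n.choose i : ℝ) * κ ^ i / (i.factorial : ℝ)) * descPochhammer ℝ i

open Polynomial in
lemma mxP_eval (κ : ℝ) (n l : ℕ) : (mxP κ n).eval (l : ℝ) = mxn κ n l := by
  unfold mxP mxn
  rw [Polynomial.eval_finsetSum]
  apply Finset.sum_congr rfl; intro i _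
  rw [eval_mul, eval_C, descPochhammer_eval_eq_descFactorial, Nat.descFactorial_eq_factorial_mul_choose]
  have : (i.factorial : ℝ) ≠ 0 := by positivity
  push_cast; field_simp

open Polynomial in
lemma mxP_natDegree_le (κ : ℝ) (n : ℕ) : (mxP κ n).natDegree ≤ n := by
  unfold mxP
  apply Polynomial.natDegree_sum_le_of_forall_le
  intro i hi
  refine (natDegree_C_mul_le _ _).trans ?_
  rw [descPochhammer_natDegree]
  simp only [Finset.mem_range] at hi; omega

open Polynomial in
lemma mxP_coeff (κ : ℝ) (n : ℕ) : (mxP κ n).coeff n = κ ^ n / (n.factorial : ℝ) := by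
  unfold mxP
  rw [finsetSum_coeff, Finset.sum_range_succ, Finset.sum_eq_zero]
  · have h := monic_descPochhammer ℝ n
    have h2 : (descPochhammer ℝ n).coeff n = 1 := by
      have := h.coeff_natDegree
      rwa [descPochhammer_natDegree] at this
    rw [coeff_C_mul, h2]; simp
  · intro i hi
    rw [coeff_C_mul, coeff_eq_zero_of_natDegree_lt, mul_zero]
    rw [descPochhammer_natDegree]
    simpa using hi

open Polynomial in
lemma mxP_comp_coeff (κ : ℝ) (hκ : κ ≠ 0) (n : ℕ) :
    ((mxP κ n).comp (C (-1/2) * X + C (-1))).natDegree ≤ n ∧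
    ((mxP κ n).comp (C (-1/2) * X + C (-1))).coeff n = κ ^ n / (n.factorial : ℝ) * (-1/2) ^ n := by
  have hc := mxP_coeff κ n
  have hne : (mxP κ n).coeff n ≠ 0 := by rw [hc]; positivity
  have hd : (mxP κ n).natDegree = n :=
    le_antisymm (mxP_natDegree_le κ n) (le_natDegree_of_ne_zero hne)
  have hl : (C (-1/2 : ℝ) * X + C (-1)).natDegree = 1 := natDegree_linear (by norm_num)
  have hlc : (C (-1/2 : ℝ) * X + C (-1)).leadingCoeff = -1/2 := leadingCoeff_linear (by norm_num)
  constructor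
  · rw [natDegree_comp, hd, hl, mul_one]
  · have := coeff_comp_degree_mul_degree (p := mxP κ n) (q := C (-1/2 : ℝ) * X + C (-1)) (by rw [hl]; norm_num)
    rw [hd, hl, mul_one, hlc, leadingCoeff, hd, hc] at this
    exact this

open Polynomial in
lemma ratio_eq (t γ : ℝ) (hγ : 0 < γ) (ht : γ < t) (p r : ℝ) (hp : p = Real.exp (-(t - γ)))
    (hr : r = Real.exp (-4 * γ)) (hr0 : 0 < r) (hr1 : r < 1) (hp0 : 0 < p) (hp1 : p < 1)
    (U : ℕ → ℕ → ℝ)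
    (hU : ∀ j l, U j l = √(1 - p ^ 2) * p ^ j * p ^ l * mxn (1 - 1 / p ^ 2) j l)
    (hs : ∀ j k, Summable fun l => U j l * U k l)
    (ho : ∀ j k, ∑' l, U j l * U k l = if j = k then 1 else 0) (n : ℕ) :
    ZSV n t γ / (Real.sinh (t + γ) ^ (n ^ 2) * Real.exp (γ - t) ^ n) = (matB U r n).det := by
  have hq1 : p ^ 2 < 1 := by nlinarith
  set κ := 1 - 1 / p ^ 2 with hκ
  have hκ0 : κ ≠ 0 := by
    rw [hκ]
    have : 1 < 1 / p ^ 2 := by rw [lt_div_iff₀ (by positivity)]; linarith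
    linarith
  set s := √((1 - p ^ 2) / (2 * p ^ 2)) with hsdef
  have hs2 : s ^ 2 = (1 - p ^ 2) / (2 * p ^ 2) :=
    Real.sq_sqrt (div_nonneg (by linarith) (by positivity))
  set w : ℕ → ℝ := fun m => 2 * (p ^ 2) ^ (m + 1) * (1 - r ^ (m + 1)) with hw
  set x : ℕ → ℝ := fun m => -2 * ((m:ℝ) + 1) with hx
  have hser : ∀ k m, serG γ k m t = w m * x m ^ k := by
    intro k m
    have a1 : (p^2) ^ (m+1) = Real.exp (2 * (m + 1) * γ) * Real.exp (-2 * (m + 1) * t) := by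
      rw [← pow_mul, hp, ← Real.exp_nat_mul, ← Real.exp_add]
      congr 1; push_cast; ring
    have a2 : (p^2) ^ (m+1) * r ^ (m+1) = Real.exp (-(2 * (m + 1) * γ)) * Real.exp (-2 * (m + 1) * t) := by
      rw [a1, hr, ← Real.exp_nat_mul, ← Real.exp_add, ← Real.exp_add, ← Real.exp_add]
      congr 1; push_cast; ring
    simp only [hw, hx]
    unfold serG
    have : 2 * (p ^ 2) ^ (m + 1) * (1 - r ^ (m + 1)) = 2 * ((p^2)^(m+1) - (p^2) ^ (m+1) * r ^ (m+1)) := by ring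
    rw [this, a2, a1]; ring
  have hsumm : ∀ k : ℕ, Summable fun m => w m * x m ^ k := by
    intro k
    have := serG_summable γ t hγ ht k
    simpa only [hser] using this
  set P : Fin n → ℝ[X] := fun j => C (s * p ^ (j:ℕ)) * (mxP κ j).comp (C (-1/2) * X + C (-1)) with hP
  have hPd : ∀ i, (P i).natDegree ≤ i := fun i =>
    (natDegree_C_mul_le _ _).trans (mxP_comp_coeff κ hκ0 i).1
  have hPc : ∀ i : Fin n, (P i).coeff i = s * p ^ (i:ℕ) * (κ ^ (i:ℕ) / ((i:ℕ).factorial : ℝ) * (-1/2) ^ (i:ℕ)) := by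
    intro i
    simp only [hP]
    rw [coeff_C_mul, (mxP_comp_coeff κ hκ0 i).2]
  have hPe : ∀ (i : Fin n) m, (P i).eval (x m) = s * p ^ (i:ℕ) * mxn κ i m := by
    intro i m
    simp only [hP, hx]
    rw [eval_mul, eval_C, eval_comp, ← mxP_eval]
    congr 2
    simp
    ring
  have hg := gram_det w x hsumm n P hPd
  have htau : (Matrix.of fun j k : Fin n => ∑' m, w m * x m ^ ((j:ℕ) + (k:ℕ))).det = tauSV n t γ := by
    unfold tauSV
    congr 1
    ext j k
    rw [Matrix.of_apply, Matrix.of_apply, phi_iter γ hγ _ t ht]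
    simp only [hser]
  have hB : (Matrix.of fun j k : Fin n => ∑' m, w m * ((P j).eval (x m) * (P k).eval (x m))) = matB U r n := by
    ext j k
    rw [Matrix.of_apply, matB, Matrix.of_apply]
    apply HasSum.tsum_eq
    have h1 := (hs j k).hasSum.sub (opA_summable U r hr0 hr1 hs j k).hasSum
    rw [ho] at h1
    have e : (fun m => w m * ((P j).eval (x m) * (P k).eval (x m))) =
      fun l => U j l * U k l - U j l * U k l * r ^ (l + 1) := by
      funext m
      rw [hPe, hPe, hU, hU]
      have := Real.sq_sqrt (by linarith : 0 ≤ 1 - p ^ 2)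
      simp only [hw]
      calc _ = s ^ 2 * (2 * p^2) * (p ^ m) ^ 2 * (1 - r ^ (m+1)) * p ^ (j:ℕ) * p ^ (k:ℕ) * mxn κ j m * mxn κ k m := by ring
        _ = (√(1 - p^2)) ^ 2 * (p ^ m) ^ 2 * (1 - r ^ (m+1)) * p ^ (j:ℕ) * p ^ (k:ℕ) * mxn κ j m * mxn κ k m := by
          rw [this, hs2, div_mul_cancel₀ _ (by positivity)]
        _ = _ := by ring
    rw [e]
    simpa [opA, Fin.ext_iff] using h1
  rw [hB, htau] at hg
  rw [hg]
  have hsinh : Real.sinh (t - γ) = (1 - p^2) / (2 * p) := by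
    rw [Real.sinh_eq, ← hp, show t - γ = -(-(t-γ)) by ring, Real.exp_neg, ← hp]
    field_simp
  have hG : Real.exp (γ - t) = p := by rw [hp]; congr 1; ring
  have hSF : 0 < Real.sinh (t + γ) := Real.sinh_pos_iff.2 (by linarith)
  set σ := (1 - p^2) / (2 * p) with hσ
  have hprod : ∀ N : ℕ, (∏ i ∈ range N, (s * p ^ i * (κ ^ i / (i.factorial : ℝ) * (-1/2) ^ i))) ^ 2 *
      (∏ i ∈ range N, (i.factorial : ℝ)) ^ 2 = σ ^ (N^2) / p ^ N := by
    intro N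
    induction N with
    | zero => simp
    | succ N ih =>
      rw [Finset.prod_range_succ, Finset.prod_range_succ, mul_pow (∏ x ∈ range N, _) _ 2,
        mul_pow (∏ x ∈ range N, (x.factorial : ℝ)) _ 2, mul_mul_mul_comm, ih]
      have hf : (N.factorial : ℝ) ≠ 0 := by positivity
      have e1 : (s * p ^ N * (κ ^ N / (N.factorial : ℝ) * (-1/2) ^ N)) ^ 2 * (N.factorial : ℝ) ^ 2 =
        s ^ 2 * ((p * κ / 2) ^ 2) ^ N := by
        rw [← mul_pow]
        have : s * p ^ N * (κ ^ N / (N.factorial : ℝ) * (-1/2) ^ N) * (N.factorial : ℝ)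
          = s * (p * κ * (-1/2)) ^ N := by rw [mul_pow, mul_pow]; field_simp
        rw [this, mul_pow, ← pow_mul, mul_comm N 2, pow_mul]
        congr 2; ring
      have e2 : p * κ / 2 = - σ := by rw [hκ, hσ]; field_simp; ring
      have e3 : s ^ 2 = σ / p := by rw [hs2, hσ]; field_simp
      have e4 : σ ^ ((N + 1) ^ 2) = σ ^ (N ^ 2) * σ ^ (2 * N) * σ := by
        rw [← pow_add, ← pow_succ]
        congr 1
        ring
      rw [e1, e2, e3, neg_sq, e4, ← pow_mul σ 2 N, pow_succ p]
      generalize σ ^ (N ^ 2) = A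
      generalize σ ^ (2 * N) = B
      field_simp
  have hpr := hprod n
  have hc : (∏ j : Fin n, (P j).coeff j) = ∏ i ∈ range n, (s * p ^ i * (κ ^ i / (i.factorial : ℝ) * (-1/2) ^ i)) := by
    rw [Finset.prod_range]
    exact Finset.prod_congr rfl fun i _ => hPc i
  rw [hc]
  have hfac : (∏ i ∈ range n, (i.factorial : ℝ)) ≠ 0 := Finset.prod_ne_zero_iff.2 fun i _ => by positivity
  unfold ZSV
  rw [hsinh, hG, mul_pow]
  have h2 : (∏ i ∈ range n, (s * p ^ i * (κ ^ i / (i.factorial : ℝ) * (-1/2) ^ i))) ^ 2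
    = σ ^ (n^2) / p ^ n / (∏ i ∈ range n, (i.factorial : ℝ)) ^ 2 := by
    rw [← hpr]; field_simp
  rw [h2]
  field_simp

theorem partition_function_ratio_constant
    (t γ : ℝ) (hγ : 0 < γ) (ht : γ < t) :
    ∃ C : ℝ, 0 < C ∧
      ∀ ε : ℝ, 0 < ε → ε < 1 →
        ∃ M : ℝ, 0 < M ∧
          ∀ n : ℕ, 1 ≤ n →
            |ZSV n t γ / (Real.sinh (t + γ) ^ (n ^ 2) * Real.exp (γ - t) ^ n) - C| ≤
              M * Real.exp (-(n : ℝ) ^ (1 - ε)) := by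
  obtain ⟨p, hp⟩ : ∃ p, p = Real.exp (-(t - γ)) := ⟨_, rfl⟩
  obtain ⟨r, hr⟩ : ∃ r, r = Real.exp (-4 * γ) := ⟨_, rfl⟩
  have hp0 : 0 < p := hp ▸ Real.exp_pos _
  have hr0 : 0 < r := hr ▸ Real.exp_pos _
  have hp1 : p < 1 := by rw [hp, Real.exp_lt_one_iff]; linarith
  have hr1 : r < 1 := by rw [hr, Real.exp_lt_one_iff]; linarith
  have hq0 : 0 < p ^ 2 := by positivity
  have hq1 : p ^ 2 < 1 := by nlinarith
  obtain ⟨U, hU⟩ : ∃ U : ℕ → ℕ → ℝ,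
      ∀ j l, U j l = √(1 - p ^ 2) * p ^ j * p ^ l * mxn (1 - 1 / p ^ 2) j l := ⟨fun j l => _, fun j l => rfl⟩
  have hUU : ∀ j k, (fun l => U j l * U k l) = fun l => ((1 - p^2) * (p ^ j * p ^ k)) *
      ((p^2) ^ l * (mxn (1 - 1 / p ^ 2) j l * mxn (1 - 1 / p ^ 2) k l)) := by
    intro j k
    funext l
    rw [hU, hU]
    have := Real.sq_sqrt (by linarith : 0 ≤ 1 - p ^ 2)
    nth_rewrite 3 [← this]
    ring
  have hs : ∀ j k, Summable fun l => U j l * U k l := by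
    intro j k
    rw [hUU]
    exact (mxn_summable (p^2) hq0 hq1 j k).mul_left _
  have ho : ∀ j k, ∑' l, U j l * U k l = if j = k then 1 else 0 := by
    intro j k
    rw [hUU, tsum_mul_left, mxn_orth (p^2) hq0 hq1]
    by_cases h : j = k
    · subst h
      have : 1 - p ^ 2 ≠ 0 := by linarith
      simp only [if_true]
      rw [← pow_mul, mul_comm 2 j, pow_mul]
      field_simp
    · simp [h]
  obtain ⟨K, ρ, hK, hρ0, hρ1, hd⟩ := opA_diag_bound p r hp0 hp1 hr0 hr1 U hU hs ho
  have hstep := matB_step U r hr0 hr1 hs ho K ρ hK hρ0 hρ1 hd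
  have h1r : 0 < 1 - r := by linarith
  have h1ρ : 0 < 1 - ρ := by linarith
  obtain ⟨C, hC, K', hK', hlim⟩ := seq_lim (fun n => (matB U r n).det)
    (K + K * K / (1 - ρ) / (1 - r)) ρ (by positivity) hρ0 hρ1
    (matB_det_pos U r hr0 hr1 hs ho) (fun n => (hstep n).1) (fun n => (hstep n).2)
  refine ⟨C, hC, fun ε hε hε1 => ?_⟩
  obtain ⟨M, hM, hb⟩ := exp_rate ρ ε hρ0 hρ1 hε hε1
  refine ⟨K' * M, by positivity, fun n hn => ?_⟩
  rw [ratio_eq t γ hγ ht p r hp hr hr0 hr1 hp0 hp1 U hU hs ho n, mul_assoc]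
  exact (hlim n).trans (mul_le_mul_of_nonneg_left (hb n hn) hK'.le)
end

section
/- For every γ > 0 there exist real numbers d₀(γ) and d₁(γ) such that for every t > γ the limit C(γ,t) = lim_{n→∞} Z_n / (F^{n²} G^n) exists, is positive, and satisfies ln C(γ,t) = d₁(γ) t + d₀(γ); that is, for fixed γ the function t ↦ ln C(γ,t) is affine on (γ,∞). -/
open Real Filter Finset

/-- Partial Gram sums `∑_{k<N} v_k v_kᵀ`. -/
noncomputable def gramSV {m : ℕ} (v : ℕ → Fin m → ℝ) (N : ℕ) : Matrix (Fin m) (Fin m) ℝ :=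
  Matrix.of fun i j => ∑ k ∈ Finset.range N, v k i * v k j

lemma det_sub_vec_le {m : ℕ} {A : Matrix (Fin m) (Fin m) ℝ} (hA : A.PosDef) (v : Fin m → ℝ) :
    (A - Matrix.of fun i j => v i * v j).det ≤ A.det := by
  have hdet := hA.det_pos
  have h1 : (A - Matrix.of fun i j => v i * v j) =
      A + Matrix.replicateCol Unit (-v) * Matrix.replicateRow Unit v := by
    ext i j
    simp [Matrix.mul_apply, sub_eq_add_neg]
  rw [h1, Matrix.det_add_replicateCol_mul_replicateRow (isUnit_iff_ne_zero.mpr hdet.ne')]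
  have h2 : (1 + Matrix.replicateRow Unit v * A⁻¹ * Matrix.replicateCol Unit (-v)).det
      = 1 - v ⬝ᵥ (A⁻¹.mulVec v) := by
    rw [Matrix.det_unique]
    rw [Matrix.mul_assoc]
    simp only [Matrix.add_apply, Matrix.one_apply_eq, Matrix.mul_apply, Matrix.replicateRow_apply,
      Matrix.replicateCol_apply, dotProduct, Matrix.mulVec, Pi.neg_apply, mul_neg,
      Finset.sum_neg_distrib]
    ring
  rw [h2]
  have h3 := hA.inv.posSemidef.dotProduct_mulVec_nonneg v
  simp only [star_trivial] at h3
  nlinarith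

lemma gram_quad {m : ℕ} (v : ℕ → Fin m → ℝ) (N : ℕ) (x : Fin m → ℝ) :
    x ⬝ᵥ ((1 - gramSV v N).mulVec x) = ∑ i, x i ^ 2 - ∑ k ∈ range N, (∑ i, v k i * x i) ^ 2 := by
  rw [Matrix.sub_mulVec, Matrix.one_mulVec, dotProduct_sub]
  congr 1
  · simp [dotProduct, sq]
  · simp only [dotProduct, Matrix.mulVec, gramSV, Matrix.of_apply, sq, Finset.sum_mul_sum]
    rw [Finset.sum_comm]
    refine Finset.sum_congr rfl fun i _ => ?_
    rw [Finset.mul_sum, Finset.sum_comm]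
    refine Finset.sum_congr rfl fun j _ => ?_
    rw [Finset.sum_mul, Finset.mul_sum]
    refine Finset.sum_congr rfl fun k _ => ?_
    ring

lemma gram_posDef {m : ℕ} (v : ℕ → Fin m → ℝ) (c : ℝ) (hc : c < 1)
    (h : ∀ (N : ℕ) (x : Fin m → ℝ),
      ∑ k ∈ range N, (∑ i, v k i * x i) ^ 2 ≤ c * ∑ i, x i ^ 2) (N : ℕ) :
    (1 - gramSV v N).PosDef := by
  refine Matrix.PosDef.of_dotProduct_mulVec_pos ?_ ?_
  · ext i j
    simp [gramSV, Matrix.one_apply, mul_comm, eq_comm]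
  · intro x hx
    rw [star_trivial, gram_quad]
    have hpos : 0 < ∑ i, x i ^ 2 := by
      obtain ⟨i, hi⟩ := Function.ne_iff.mp hx
      exact Finset.sum_pos' (fun i _ => sq_nonneg _) ⟨i, Finset.mem_univ _, by
        have : x i ≠ 0 := hi
        positivity⟩
    nlinarith [h N x]

lemma gram_det_succ_le {m : ℕ} (v : ℕ → Fin m → ℝ) (c : ℝ) (hc : c < 1)
    (h : ∀ (N : ℕ) (x : Fin m → ℝ),
      ∑ k ∈ range N, (∑ i, v k i * x i) ^ 2 ≤ c * ∑ i, x i ^ 2) (N : ℕ) :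
    (1 - gramSV v (N + 1)).det ≤ (1 - gramSV v N).det := by
  have := det_sub_vec_le (gram_posDef v c hc h N) (v N)
  convert this using 2
  ext i j
  simp only [gramSV, Matrix.sub_apply, Matrix.of_apply, Finset.sum_range_succ]
  ring

lemma besselSV (u : ℕ → ℕ → ℝ)
    (ho : ∀ i j, HasSum (fun k => u i k * u j k) (if i = j then 1 else 0))
    (n N : ℕ) (x : Fin n → ℝ) :
    ∑ k ∈ range N, (∑ i : Fin n, u i k * x i) ^ 2 ≤ ∑ i, x i ^ 2 := by
  have h : HasSum (fun k => (∑ i : Fin n, u i k * x i) ^ 2) (∑ i, x i ^ 2) := by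
    have h1 : HasSum (fun k => ∑ i : Fin n, ∑ j : Fin n, (x i * x j) * (u i k * u j k))
        (∑ i : Fin n, ∑ j : Fin n, (x i * x j) * (if (i : ℕ) = j then 1 else 0)) :=
      hasSum_sum fun i _ => hasSum_sum fun j _ => (ho i j).mul_left _
    convert h1 using 1
    · ext k
      rw [sq, Finset.sum_mul_sum]
      refine Finset.sum_congr rfl fun i _ => Finset.sum_congr rfl fun j _ => ?_
      ring
    · refine Finset.sum_congr rfl fun i _ => ?_
      simp [← Fin.ext_iff, sq]
  exact sum_le_hasSum _ (fun k _ => sq_nonneg _) h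

theorem fredholm_limit (u : ℕ → ℕ → ℝ) (hs : ∀ i j, u i j = u j i)
    (ho : ∀ i j, HasSum (fun k => u i k * u j k) (if i = j then 1 else 0))
    (ρ : ℝ) (h0 : 0 < ρ) (h1 : ρ < 1) (R : ℕ → ℝ)
    (hR : ∀ n, R n = Matrix.det (Matrix.of fun i j : Fin n =>
      ∑' k : ℕ, (1 - ρ ^ (2 * (k + 1))) * (u i k * u j k)))
    (P : ℝ) (hP : Tendsto (fun M => ∏ k ∈ range M, (1 - ρ ^ (2 * (k + 1)))) atTop (nhds P)) :
    Tendsto R atTop (nhds P) := by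
  have hc : ρ ^ 2 < 1 := by nlinarith
  have hk : ∀ k : ℕ, (ρ ^ (k + 1)) ^ 2 ≤ ρ ^ 2 := fun k => by
    rw [← pow_mul]; exact pow_le_pow_of_le_one h0.le h1.le (by lia)
  let v1 : (n : ℕ) → ℕ → Fin n → ℝ := fun n k i => u i k * ρ ^ (k + 1)
  let v2 : (M : ℕ) → ℕ → Fin M → ℝ := fun M i k => u i k * ρ ^ ((k : ℕ) + 1)
  have b1 : ∀ (n N : ℕ) (x : Fin n → ℝ),
      ∑ k ∈ range N, (∑ i, v1 n k i * x i) ^ 2 ≤ ρ ^ 2 * ∑ i, x i ^ 2 := by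
    intro n N x
    calc ∑ k ∈ range N, (∑ i, v1 n k i * x i) ^ 2
        = ∑ k ∈ range N, (ρ ^ (k + 1)) ^ 2 * (∑ i : Fin n, u i k * x i) ^ 2 := by
          refine Finset.sum_congr rfl fun k _ => ?_
          rw [← mul_pow, Finset.mul_sum]
          congr 1
          refine Finset.sum_congr rfl fun i _ => ?_
          simp only [v1]; ring
      _ ≤ ∑ k ∈ range N, ρ ^ 2 * (∑ i : Fin n, u i k * x i) ^ 2 :=
          Finset.sum_le_sum fun k _ => mul_le_mul_of_nonneg_right (hk k) (sq_nonneg _)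
      _ ≤ ρ ^ 2 * ∑ i, x i ^ 2 := by
          rw [← Finset.mul_sum]
          exact mul_le_mul_of_nonneg_left (besselSV u ho n N x) (sq_nonneg _)
  have b2 : ∀ (n N : ℕ) (x : Fin n → ℝ),
      ∑ k ∈ range N, (∑ i, v2 n k i * x i) ^ 2 ≤ ρ ^ 2 * ∑ i, x i ^ 2 := by
    intro n N x
    calc ∑ k ∈ range N, (∑ i, v2 n k i * x i) ^ 2
        = ∑ k ∈ range N, (∑ i : Fin n, u i k * (ρ ^ ((i : ℕ) + 1) * x i)) ^ 2 := by
          refine Finset.sum_congr rfl fun k _ => ?_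
          congr 1
          refine Finset.sum_congr rfl fun i _ => ?_
          simp only [v2]; rw [hs k i]; ring
      _ ≤ ∑ i : Fin n, (ρ ^ ((i : ℕ) + 1) * x i) ^ 2 := besselSV u ho n N _
      _ ≤ ρ ^ 2 * ∑ i, x i ^ 2 := by
          rw [Finset.mul_sum]
          refine Finset.sum_le_sum fun i _ => ?_
          rw [mul_pow]
          exact mul_le_mul_of_nonneg_right (hk i) (sq_nonneg _)
  let f : ℕ → ℕ → ℝ := fun n M => (1 - gramSV (v1 n) M).det
  have hf2 : ∀ n M, f n M = (1 - gramSV (v2 M) n).det := by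
    intro n M
    let W : Matrix (Fin n) (Fin M) ℝ := Matrix.of fun i k => u i k * ρ ^ ((k : ℕ) + 1)
    have e1 : gramSV (v1 n) M = W * W.transpose := by
      ext i j
      simp [gramSV, v1, W, Matrix.mul_apply, Finset.sum_range]
    have e2 : gramSV (v2 M) n = W.transpose * W := by
      ext i j
      simp [gramSV, v2, W, Matrix.mul_apply, Finset.sum_range]
    simp only [f]
    rw [e1, e2, Matrix.det_one_sub_mul_comm]
  have anti1 : ∀ n, Antitone (f n) := fun n =>
    antitone_nat_of_succ_le fun M => gram_det_succ_le (v1 n) _ hc (b1 n) M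
  have anti2 : ∀ M, Antitone (fun n => f n M) := fun M =>
    antitone_nat_of_succ_le fun n => by
      simp only [hf2]
      exact gram_det_succ_le (v2 M) _ hc (b2 M) n
  have limM : ∀ n, Tendsto (f n) atTop (nhds (R n)) := by
    intro n
    rw [hR]
    have hcont : Continuous (fun A : Matrix (Fin n) (Fin n) ℝ => A.det) :=
      Continuous.matrix_det continuous_id
    refine (hcont.tendsto _).comp ?_
    refine tendsto_pi_nhds.mpr fun i => tendsto_pi_nhds.mpr fun j => ?_
    have hsum : Summable fun k : ℕ => ρ ^ (2 * (k + 1)) * (u i k * u j k) := by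
      refine Summable.of_norm_bounded (ho i j).summable.norm fun k => ?_
      rw [norm_mul]
      refine mul_le_of_le_one_left (norm_nonneg _) ?_
      rw [Real.norm_of_nonneg (by positivity)]
      exact pow_le_one₀ h0.le h1.le
    have e : ∑' k : ℕ, (1 - ρ ^ (2 * (k + 1))) * (u i k * u j k)
        = (if (i : ℕ) = j then 1 else 0) - ∑' k : ℕ, ρ ^ (2 * (k + 1)) * (u i k * u j k) := by
      rw [← (ho i j).tsum_eq, ← (ho i j).summable.tsum_sub hsum]
      exact tsum_congr fun k => by ring
    simp only [Matrix.of_apply]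
    rw [e]
    simp only [Matrix.sub_apply, Matrix.one_apply, Fin.ext_iff]
    refine Tendsto.const_sub _ ?_
    have := hsum.hasSum.tendsto_sum_nat
    refine this.congr fun M => ?_
    simp only [gramSV, Matrix.of_apply, v1]
    refine Finset.sum_congr rfl fun k _ => ?_
    ring
  have limn : ∀ M, Tendsto (fun n => f n M) atTop
      (nhds (∏ k ∈ range M, (1 - ρ ^ (2 * (k + 1))))) := by
    intro M
    simp only [hf2]
    have hcont : Continuous (fun A : Matrix (Fin M) (Fin M) ℝ => A.det) :=
      Continuous.matrix_det continuous_id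
    have hd : ∏ k ∈ range M, (1 - ρ ^ (2 * (k + 1))) =
        (Matrix.diagonal fun k : Fin M => (1 - ρ ^ (2 * ((k : ℕ) + 1)))).det := by
      rw [Matrix.det_diagonal, Finset.prod_range]
    rw [hd]
    refine (hcont.tendsto _).comp ?_
    refine tendsto_pi_nhds.mpr fun k => tendsto_pi_nhds.mpr fun l => ?_
    have e : (Matrix.diagonal fun k : Fin M => (1 - ρ ^ (2 * ((k : ℕ) + 1)))) k l
        = (1 : Matrix (Fin M) (Fin M) ℝ) k l -
          (if (k : ℕ) = l then 1 else 0) * (ρ ^ ((k : ℕ) + 1) * ρ ^ ((l : ℕ) + 1)) := by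
      by_cases hkl : k = l
      · subst hkl
        simp
        ring
      · have : (k : ℕ) ≠ l := fun h => hkl (Fin.ext h)
        simp [hkl, this]
    rw [e]
    simp only [Matrix.sub_apply]
    refine Tendsto.const_sub _ ?_
    have := ((ho k l).mul_right (ρ ^ ((k : ℕ) + 1) * ρ ^ ((l : ℕ) + 1))).tendsto_sum_nat
    refine this.congr fun n => ?_
    simp only [gramSV, Matrix.of_apply, v2]
    refine Finset.sum_congr rfl fun i _ => ?_
    rw [hs k i, hs l i]
    ring
  have lower : ∀ n, P ≤ R n := fun n =>
    le_of_tendsto_of_tendsto' hP (limM n) fun M => (anti2 M).le_of_tendsto (limn M) n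
  have upper : ∀ n M, R n ≤ f n M := fun n M => (anti1 n).le_of_tendsto (limM n) M
  rw [tendsto_order]
  refine ⟨fun a ha => Eventually.of_forall fun n => ha.trans_le (lower n), fun a ha => ?_⟩
  obtain ⟨M, hM⟩ := ((tendsto_order.1 hP).2 a ha).exists
  filter_upwards [(tendsto_order.1 (limn M)).2 a hM] with n hn
  exact (upper n M).trans_lt hn

lemma hasSum_congr_both {f g : ℕ → ℝ} {a b : ℝ} (h : HasSum f a) (hfg : ∀ k, g k = f k)
    (hab : b = a) : HasSum g b := by
  have : g = f := funext hfg
  rw [this, hab]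
  exact h

open Polynomial in
lemma summable_poly_geom (q : ℝ) (h0 : 0 < q) (h1 : q < 1) (P : ℝ[X]) :
    Summable fun k : ℕ => q ^ k * P.eval (k : ℝ) := by
  simp only [Polynomial.eval_eq_sum_range, Finset.mul_sum]
  refine summable_sum fun m _ => ?_
  have := (summable_pow_mul_geometric_of_norm_lt_one m
    (show ‖q‖ < 1 by rwa [Real.norm_of_nonneg h0.le])).mul_left (P.coeff m)
  refine this.congr fun k => ?_
  ring

lemma hasSum_telescope {g : ℕ → ℝ} (hg : Summable g) :
    HasSum (fun k => g (k + 1) - g k) (-g 0) := by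
  have h1 := (hasSum_nat_add_iff' (f := g) 1).mpr hg.hasSum
  have := h1.sub hg.hasSum
  simpa using this

/-- Meixner polynomials with `β = 1`. -/
noncomputable def MSV (q : ℝ) (j k : ℕ) : ℝ :=
  ∑ i ∈ range (j + 1), (j.choose i : ℝ) * (k.choose i : ℝ) * (1 - 1 / q) ^ i

lemma MSV_eq (q : ℝ) (j k N : ℕ) (h : j ≤ N) :
    MSV q j k = ∑ i ∈ range (N + 1), (j.choose i : ℝ) * (k.choose i : ℝ) * (1 - 1 / q) ^ i := by
  refine Finset.sum_subset (fun x hx => ?_) fun x _ hx => ?_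
  · simp only [Finset.mem_range] at *; lia
  · simp only [Finset.mem_range] at hx
    rw [Nat.choose_eq_zero_of_lt (by lia : j < x)]
    simp

lemma MSV_symm (q : ℝ) (j k : ℕ) : MSV q j k = MSV q k j := by
  rw [MSV_eq q j k (max j k) (le_max_left _ _), MSV_eq q k j (max j k) (le_max_right _ _)]
  exact Finset.sum_congr rfl fun i _ => by ring

lemma MSV_zero_left (q : ℝ) (k : ℕ) : MSV q 0 k = 1 := by simp [MSV]

lemma MSV_zero_right (q : ℝ) (k : ℕ) : MSV q k 0 = 1 := by rw [MSV_symm, MSV_zero_left]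

lemma MSV_rec (q : ℝ) (j k : ℕ) :
    MSV q (j + 1) (k + 1) - MSV q j (k + 1) = MSV q (j + 1) k - MSV q j k / q := by
  have key : MSV q (j + 1) (k + 1) - MSV q j (k + 1) - MSV q (j + 1) k + MSV q j k
      = (1 - 1 / q) * MSV q j k := by
    rw [MSV_eq q (j + 1) (k + 1) (j + 1) le_rfl, MSV_eq q j (k + 1) (j + 1) (by lia),
      MSV_eq q (j + 1) k (j + 1) le_rfl]
    nth_rewrite 1 [MSV_eq q j k (j + 1) (by lia)]
    rw [MSV]
    simp only [Finset.sum_range_succ' _ (j + 1), Nat.choose_zero_right]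
    have : ∀ a b c d : ℝ, (a + ((1:ℕ):ℝ) * ((1:ℕ):ℝ) * (1 - 1 / q) ^ 0)
        - (b + ((1:ℕ):ℝ) * ((1:ℕ):ℝ) * (1 - 1 / q) ^ 0)
        - (c + ((1:ℕ):ℝ) * ((1:ℕ):ℝ) * (1 - 1 / q) ^ 0)
        + (d + ((1:ℕ):ℝ) * ((1:ℕ):ℝ) * (1 - 1 / q) ^ 0) = a - b - c + d := by
      intros; ring
    rw [this, ← Finset.sum_sub_distrib, ← Finset.sum_sub_distrib, ← Finset.sum_add_distrib,
      Finset.mul_sum]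
    refine Finset.sum_congr rfl fun i _ => ?_
    rw [Nat.choose_succ_succ, Nat.choose_succ_succ]
    push_cast
    ring
  have : MSV q j k / q = (1 / q) * MSV q j k := by ring
  rw [this]
  linarith

open Polynomial in
/-- Polynomial version of `MSV`. -/
noncomputable def pSV (q : ℝ) (j : ℕ) : ℝ[X] :=
  ∑ i ∈ range (j + 1),
    C ((j.choose i : ℝ) * (1 - 1 / q) ^ i / (i.factorial : ℝ)) * descPochhammer ℝ i

lemma pSV_eval (q : ℝ) (j k : ℕ) : (pSV q j).eval (k : ℝ) = MSV q j k := by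
  simp only [pSV, MSV, Polynomial.eval_finsetSum, Polynomial.eval_mul, Polynomial.eval_C,
    descPochhammer_eval_eq_descFactorial]
  refine Finset.sum_congr rfl fun i _ => ?_
  rw [Nat.descFactorial_eq_factorial_mul_choose]
  have : (i.factorial : ℝ) ≠ 0 := by positivity
  push_cast
  field_simp

lemma pSV_natDegree (q : ℝ) (j : ℕ) : (pSV q j).natDegree ≤ j := by
  refine Polynomial.natDegree_sum_le_of_forall_le _ _ fun i hi => ?_
  refine (Polynomial.natDegree_C_mul_le _ _).trans ?_
  rw [descPochhammer_natDegree]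
  simp only [Finset.mem_range] at hi; lia

lemma pSV_coeff (q : ℝ) (j : ℕ) :
    (pSV q j).coeff j = (1 - 1 / q) ^ j / (j.factorial : ℝ) := by
  rw [pSV, Polynomial.finsetSum_coeff, Finset.sum_range_succ, Finset.sum_eq_zero, zero_add,
    Polynomial.coeff_C_mul]
  · have := (monic_descPochhammer ℝ j).coeff_natDegree
    rw [descPochhammer_natDegree] at this
    rw [this]; simp
  · intro i hi
    simp only [Finset.mem_range] at hi
    rw [Polynomial.coeff_C_mul, Polynomial.coeff_eq_zero_of_natDegree_lt, mul_zero]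
    rwa [descPochhammer_natDegree]

lemma MSV_summable (q : ℝ) (h0 : 0 < q) (h1 : q < 1) (i j : ℕ) :
    Summable fun k => q ^ k * (MSV q i k * MSV q j k) := by
  have := summable_poly_geom q h0 h1 (pSV q i * pSV q j)
  simpa only [Polynomial.eval_mul, pSV_eval] using this

lemma MSV_sum_zero (q : ℝ) (h0 : 0 < q) (h1 : q < 1) (j : ℕ) :
    HasSum (fun k => q ^ k * MSV q (j + 1) k) 0 := by
  have hs : ∀ i, Summable fun k => q ^ k * MSV q i k := fun i => by
    simpa [MSV_zero_left] using MSV_summable q h0 h1 i 0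
  have hg : Summable fun k => q ^ k * (MSV q (j + 1) k - MSV q j k) := by
    refine ((hs (j + 1)).sub (hs j)).congr fun k => ?_
    ring
  have h := (hasSum_telescope hg).mul_left (-(1 - q)⁻¹)
  have hq : 1 - q ≠ 0 := by linarith
  refine hasSum_congr_both h (fun k => ?_) ?_
  · rw [MSV_rec]
    field_simp
    ring
  · simp [MSV_zero_right]

lemma MSV_orth (q : ℝ) (h0 : 0 < q) (h1 : q < 1) (i j : ℕ) :
    HasSum (fun k => q ^ k * (MSV q i k * MSV q j k))
      (if i = j then 1 / (q ^ i * (1 - q)) else 0) := by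
  have hq : 1 - q ≠ 0 := by linarith
  induction i generalizing j with
  | zero =>
    cases j with
    | zero => simpa [MSV_zero_left] using hasSum_geometric_of_lt_one h0.le h1
    | succ j => simpa [MSV_zero_left] using MSV_sum_zero q h0 h1 j
  | succ i ih =>
    cases j with
    | zero => simpa [MSV_zero_left] using MSV_sum_zero q h0 h1 i
    | succ j =>
      have hg : Summable fun k => q ^ k *
          ((MSV q (i + 1) k - MSV q i k) * (MSV q (j + 1) k - MSV q j k)) := by
        refine ((((MSV_summable q h0 h1 (i + 1) (j + 1)).sub
          (MSV_summable q h0 h1 (i + 1) j)).sub (MSV_summable q h0 h1 i (j + 1))).add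
          (MSV_summable q h0 h1 i j)).congr fun k => ?_
        ring
      have h := ((hasSum_telescope hg).mul_left (-(1 - q)⁻¹)).add ((ih j).mul_left (1 / q))
      refine hasSum_congr_both h (fun k => ?_) ?_
      · rw [MSV_rec, MSV_rec]
        field_simp
        ring
      · simp [MSV_zero_right]
        split_ifs
        · field_simp
          ring
        · rfl

/-- Orthonormal Meixner functions. -/
noncomputable def uSV (s : ℝ) (i k : ℕ) : ℝ := √(1 - s ^ 2) * s ^ (i + k) * MSV (s ^ 2) i k

lemma uSV_symm (s : ℝ) (i j : ℕ) : uSV s i j = uSV s j i := by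
  rw [uSV, uSV, MSV_symm, add_comm]

lemma uSV_orth (s : ℝ) (h0 : 0 < s) (h1 : s < 1) (i j : ℕ) :
    HasSum (fun k => uSV s i k * uSV s j k) (if i = j then 1 else 0) := by
  have hq1 : s ^ 2 < 1 := by nlinarith
  have hsq : √(1 - s ^ 2) * √(1 - s ^ 2) = 1 - s ^ 2 := Real.mul_self_sqrt (by linarith)
  have hne : 1 - s ^ 2 ≠ 0 := by linarith
  have h := (MSV_orth (s ^ 2) (by positivity) hq1 i j).mul_left ((1 - s ^ 2) * s ^ (i + j))
  refine hasSum_congr_both h (fun k => ?_) ?_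
  · rw [uSV, uSV]
    linear_combination (s ^ (i + k) * s ^ (j + k) * MSV (s ^ 2) i k * MSV (s ^ 2) j k) * hsq
  · split_ifs with hij
    · subst hij
      field_simp
      ring
    · simp

lemma gram_change (w x : ℕ → ℝ) (P : ℕ → Polynomial ℝ) (hd : ∀ i, (P i).natDegree ≤ i)
    (hw : ∀ m : ℕ, Summable fun k => w k * x k ^ m) (n : ℕ) :
    (Matrix.of fun i j : Fin n => ∑' k, w k * ((P i).eval (x k) * (P j).eval (x k))).det
      = (∏ i ∈ range n, (P i).coeff i) ^ 2 *
        (Matrix.of fun i j : Fin n => ∑' k, w k * x k ^ ((i : ℕ) + j)).det := by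
  let A : Matrix (Fin n) (Fin n) ℝ := Matrix.of fun a i => (P i).coeff a
  have hA : A.det = ∏ i ∈ range n, (P i).coeff i := by
    rw [Matrix.det_of_isUpperTriangular
      (Matrix.matrixOfPolynomials_blockTriangular (fun i : Fin n => P i) fun i => hd i),
      Finset.prod_range]
    rfl
  have hev : ∀ (i : Fin n) (y : ℝ), (P i).eval y = ∑ a : Fin n, (P i).coeff a * y ^ (a : ℕ) := by
    intro i y
    rw [Polynomial.eval_eq_sum_range' (lt_of_le_of_lt (hd i) i.2), Finset.sum_range]
  have hM : (Matrix.of fun i j : Fin n => ∑' k, w k * ((P i).eval (x k) * (P j).eval (x k)))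
      = A.transpose * (Matrix.of fun i j : Fin n => ∑' k, w k * x k ^ ((i : ℕ) + j)) * A := by
    ext i j
    simp only [Matrix.mul_apply, Matrix.of_apply, Matrix.transpose_apply, A]
    have h : HasSum (fun k => ∑ b : Fin n, ∑ a : Fin n,
        ((P i).coeff a * (P j).coeff b) * (w k * x k ^ ((a : ℕ) + b)))
        (∑ b : Fin n, ∑ a : Fin n,
        ((P i).coeff a * (P j).coeff b) * ∑' k, (w k * x k ^ ((a : ℕ) + b))) :=
      hasSum_sum fun b _ => hasSum_sum fun a _ => (hw _).hasSum.mul_left _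
    have e : ∀ k, w k * ((P i).eval (x k) * (P j).eval (x k)) = ∑ b : Fin n, ∑ a : Fin n,
        ((P i).coeff a * (P j).coeff b) * (w k * x k ^ ((a : ℕ) + b)) := by
      intro k
      rw [hev, hev, Finset.sum_mul_sum, Finset.sum_comm, Finset.mul_sum]
      refine Finset.sum_congr rfl fun b _ => ?_
      rw [Finset.mul_sum]
      refine Finset.sum_congr rfl fun a _ => ?_
      ring
    rw [tsum_congr e, h.tsum_eq]
    refine Finset.sum_congr rfl fun b _ => ?_
    rw [Finset.sum_mul]
    refine Finset.sum_congr rfl fun a _ => ?_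
    ring
  rw [hM, Matrix.det_mul, Matrix.det_mul, Matrix.det_transpose, hA]
  ring

/-- Terms of the series for the `m`-th derivative of `phiSV`. -/
noncomputable def gSV (γ : ℝ) (m k : ℕ) (s : ℝ) : ℝ :=
  2 * (Real.exp (-2 * ((k : ℝ) + 1) * (s - γ)) - Real.exp (-2 * ((k : ℝ) + 1) * (s + γ))) *
    (-2 * ((k : ℝ) + 1)) ^ m

lemma gSV_deriv (γ : ℝ) (m k : ℕ) (s : ℝ) :
    HasDerivAt (gSV γ m k) (gSV γ (m + 1) k s) s := by
  have h1 : HasDerivAt (fun s => Real.exp (-2 * ((k : ℝ) + 1) * (s - γ)))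
      (Real.exp (-2 * ((k : ℝ) + 1) * (s - γ)) * (-2 * ((k : ℝ) + 1) * 1)) s :=
    (((hasDerivAt_id s).sub_const γ).const_mul _).exp
  have h2 : HasDerivAt (fun s => Real.exp (-2 * ((k : ℝ) + 1) * (s + γ)))
      (Real.exp (-2 * ((k : ℝ) + 1) * (s + γ)) * (-2 * ((k : ℝ) + 1) * 1)) s :=
    (((hasDerivAt_id s).add_const γ).const_mul _).exp
  have h3 : HasDerivAt (gSV γ m k) _ s := ((h1.sub h2).const_mul 2).mul_const ((-2 * ((k : ℝ) + 1)) ^ m)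
  refine h3.congr_deriv ?_
  rw [gSV]
  ring

/-- Dominating terms. -/
noncomputable def bSV (γ b : ℝ) (m k : ℕ) : ℝ :=
  2 * Real.exp (-2 * ((k : ℝ) + 1) * (b - γ)) * (2 * ((k : ℝ) + 1)) ^ m

lemma bSV_summable (γ b : ℝ) (hb : γ < b) (m : ℕ) : Summable (bSV γ b m) := by
  have hr : ‖Real.exp (-2 * (b - γ))‖ < 1 := by
    rw [Real.norm_of_nonneg (Real.exp_pos _).le, Real.exp_lt_one_iff]
    linarith
  have h0 : Summable (fun n : ℕ => (n : ℝ) ^ m * Real.exp (-2 * (b - γ)) ^ n) :=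
    summable_pow_mul_geometric_of_norm_lt_one m hr
  have h1 : Summable (fun n : ℕ => ((n + 1 : ℕ) : ℝ) ^ m * Real.exp (-2 * (b - γ)) ^ (n + 1)) :=
    (summable_nat_add_iff (f := fun n : ℕ => (n : ℝ) ^ m * Real.exp (-2 * (b - γ)) ^ n) 1).mpr h0
  have h2 := h1.mul_left (2 * 2 ^ m)
  have e : bSV γ b m = fun k : ℕ => 2 * 2 ^ m *
      (((k + 1 : ℕ) : ℝ) ^ m * Real.exp (-2 * (b - γ)) ^ (k + 1)) := by
    funext k
    have e1 : Real.exp (-2 * (b - γ)) ^ (k + 1) = Real.exp (-2 * ((k : ℝ) + 1) * (b - γ)) := by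
      rw [← Real.exp_nat_mul]
      congr 1
      push_cast; ring
    rw [bSV, e1, mul_pow]
    push_cast
    ring
  rw [e]
  exact h2

lemma gSV_bound (γ b s : ℝ) (hγ : 0 < γ) (hs : b ≤ s) (m k : ℕ) :
    ‖gSV γ m k s‖ ≤ bSV γ b m k := by
  have hk : (0 : ℝ) < (k : ℝ) + 1 := by positivity
  rw [gSV, bSV, norm_mul, norm_mul, norm_pow]
  have e1 : ‖-2 * ((k : ℝ) + 1)‖ = 2 * ((k : ℝ) + 1) := by
    rw [Real.norm_eq_abs, abs_of_neg (by linarith)]; ring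
  have e2 : ‖Real.exp (-2 * ((k : ℝ) + 1) * (s - γ)) - Real.exp (-2 * ((k : ℝ) + 1) * (s + γ))‖
      ≤ Real.exp (-2 * ((k : ℝ) + 1) * (b - γ)) := by
    have a1 : Real.exp (-2 * ((k : ℝ) + 1) * (s + γ)) ≤ Real.exp (-2 * ((k : ℝ) + 1) * (s - γ)) :=
      Real.exp_le_exp.mpr (by nlinarith)
    have a2 : Real.exp (-2 * ((k : ℝ) + 1) * (s - γ)) ≤ Real.exp (-2 * ((k : ℝ) + 1) * (b - γ)) :=
      Real.exp_le_exp.mpr (by nlinarith)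
    rw [Real.norm_of_nonneg (by linarith)]
    linarith [Real.exp_pos (-2 * ((k : ℝ) + 1) * (s + γ))]
  rw [e1, Real.norm_of_nonneg (by norm_num : (0:ℝ) ≤ 2)]
  gcongr

lemma gSV_summable (γ s : ℝ) (hγ : 0 < γ) (hs : γ < s) (m : ℕ) :
    Summable fun k => gSV γ m k s :=
  Summable.of_norm_bounded (bSV_summable γ s hs m) fun k => gSV_bound γ s s hγ le_rfl m k

lemma coth_series (y : ℝ) (hy : 0 < y) :
    HasSum (fun k : ℕ => Real.exp (-2 * ((k : ℝ) + 1) * y)) (Real.exp (-y) / (2 * Real.sinh y)) := by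
  have hlt : Real.exp (-2 * y) < 1 := by rw [Real.exp_lt_one_iff]; linarith
  have h := (hasSum_geometric_of_lt_one (Real.exp_pos (-2 * y)).le hlt).mul_left (Real.exp (-2 * y))
  refine hasSum_congr_both h (fun k => ?_) ?_
  · rw [← Real.exp_nat_mul, ← Real.exp_add]
    congr 1
    ring
  · have e : Real.exp (-2 * y) = Real.exp (-y) * Real.exp (-y) := by
      rw [← Real.exp_add]; congr 1; ring
    have e' : Real.exp y * Real.exp (-y) = 1 := by rw [← Real.exp_add]; simp
    have hp := Real.exp_pos (-y)
    rw [Real.sinh_eq, e, ← div_eq_mul_inv]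
    rw [e] at hlt
    have h3 : 1 - Real.exp (-y) * Real.exp (-y) ≠ 0 := by linarith
    have h4 : 2 * ((Real.exp y - Real.exp (-y)) / 2) ≠ 0 := by
      have : Real.exp (-y) < Real.exp y := Real.exp_lt_exp.mpr (by linarith)
      linarith
    rw [div_eq_div_iff h4 h3]
    linear_combination (-Real.exp (-y)) * e'

lemma phiSV_series (γ s : ℝ) (hγ : 0 < γ) (hs : γ < s) :
    phiSV γ s = ∑' k, gSV γ 0 k s := by
  have h := (((coth_series (s - γ) (by linarith)).sub
    (coth_series (s + γ) (by linarith))).mul_left 2)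
  have h' := hasSum_congr_both (g := fun k => gSV γ 0 k s) h (fun k => by simp [gSV]) rfl
  rw [h'.tsum_eq, phiSV]
  have h1 : Real.sinh (s - γ) ≠ 0 := (Real.sinh_pos_iff.mpr (by linarith)).ne'
  have h2 : Real.sinh (s + γ) ≠ 0 := (Real.sinh_pos_iff.mpr (by linarith)).ne'
  have e : Real.sinh (2 * γ) = Real.exp (-(s - γ)) * Real.sinh (s + γ)
      - Real.exp (-(s + γ)) * Real.sinh (s - γ) := by
    simp only [Real.sinh_eq]
    have : ∀ a b : ℝ, Real.exp a * ((Real.exp b - Real.exp (-b)) / 2)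
        = (Real.exp (a + b) - Real.exp (a - b)) / 2 := by
      intro a b; rw [Real.exp_add, sub_eq_add_neg a b, Real.exp_add]; ring
    rw [this, this]
    have a1 : -(s - γ) + (s + γ) = 2 * γ := by ring
    have a2 : -(s - γ) - (s + γ) = -(2 * s) := by ring
    have a3 : -(s + γ) + (s - γ) = -(2 * γ) := by ring
    have a4 : -(s + γ) - (s - γ) = -(2 * s) := by ring
    rw [a1, a2, a3, a4]
    ring
  rw [e]
  field_simp

lemma phiSV_iteratedDeriv (γ : ℝ) (hγ : 0 < γ) (m : ℕ) :
    ∀ s, γ < s → iteratedDeriv m (phiSV γ) s = ∑' k, gSV γ m k s := by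
  induction m with
  | zero =>
    intro s hs
    rw [iteratedDeriv_zero, phiSV_series γ s hγ hs]
  | succ m ih =>
    intro s hs
    rw [iteratedDeriv_succ]
    have h1 : iteratedDeriv m (phiSV γ) =ᶠ[nhds s] fun z => ∑' k, gSV γ m k z := by
      filter_upwards [Ioi_mem_nhds hs] with z hz using ih z hz
    rw [h1.deriv_eq]
    have hb1 : γ < (γ + s) / 2 := by linarith
    have hb2 : (γ + s) / 2 < s := by linarith
    exact (hasDerivAt_tsum_of_isPreconnected (bSV_summable γ _ hb1 (m + 1)) isOpen_Ioi
      (isPreconnected_Ioi (a := (γ + s) / 2)) (fun k y _ => gSV_deriv γ m k y)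
      (fun k y hy => gSV_bound γ _ y hγ (le_of_lt hy) (m + 1) k) hb2
      (gSV_summable γ s hγ hs m) hb2).deriv

open Polynomial in
/-- Rescaled orthogonal polynomials in the variable `x = -2(k+1)`. -/
noncomputable def qSV (a s : ℝ) (i : ℕ) : ℝ[X] :=
  C (a * s ^ i) * (pSV (s ^ 2) i).comp (C (-1 / 2) * X + C (-1))

lemma qSV_eval (a s : ℝ) (i k : ℕ) :
    (qSV a s i).eval (-2 * ((k : ℝ) + 1)) = a * s ^ i * MSV (s ^ 2) i k := by
  have : (-1 / 2 : ℝ) * (-2 * ((k : ℝ) + 1)) + -1 = k := by ring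
  simp only [qSV, Polynomial.eval_mul, Polynomial.eval_C, Polynomial.eval_comp,
    Polynomial.eval_add, Polynomial.eval_X, this, pSV_eval]

lemma qSV_natDegree (a s : ℝ) (i : ℕ) : (qSV a s i).natDegree ≤ i := by
  refine (Polynomial.natDegree_C_mul_le _ _).trans ?_
  rw [Polynomial.natDegree_comp, Polynomial.natDegree_linear (by norm_num), mul_one]
  exact pSV_natDegree _ _

lemma qSV_coeff (a s σ : ℝ) (h0 : 0 < s) (h1 : s < 1) (hσ : 2 * s * σ = 1 - s ^ 2) (i : ℕ) :
    (qSV a s i).coeff i = a * σ ^ i / (i.factorial : ℝ) := by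
  have hf : (i.factorial : ℝ) ≠ 0 := by positivity
  have hq1 : s ^ 2 < 1 := by nlinarith
  have hc : (1 : ℝ) - 1 / s ^ 2 ≠ 0 := by
    have : s ^ 2 ≠ 0 := by positivity
    intro h
    field_simp at h
    linarith
  have hdeg : (pSV (s ^ 2) i).natDegree = i := by
    refine Polynomial.natDegree_eq_of_le_of_coeff_ne_zero (pSV_natDegree _ _) ?_
    rw [pSV_coeff]
    exact div_ne_zero (pow_ne_zero _ hc) hf
  have hlin : (Polynomial.C (-1 / 2 : ℝ) * Polynomial.X + Polynomial.C (-1)).natDegree = 1 :=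
    Polynomial.natDegree_linear (by norm_num)
  have h := Polynomial.coeff_comp_degree_mul_degree (p := pSV (s ^ 2) i)
    (q := Polynomial.C (-1 / 2 : ℝ) * Polynomial.X + Polynomial.C (-1)) (by rw [hlin]; norm_num)
  rw [hlin, hdeg, mul_one, Polynomial.leadingCoeff_linear (by norm_num),
    Polynomial.leadingCoeff, hdeg, pSV_coeff] at h
  rw [qSV, Polynomial.coeff_C_mul, h]
  have e : σ = s * (1 - 1 / s ^ 2) * (-1 / 2) := by
    field_simp
    linarith
  rw [e, mul_pow, mul_pow]
  ring

lemma prod_sq_SV (a s σ : ℝ) (h0 : 0 < s) (ha : a ^ 2 = σ / s) (n : ℕ) :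
    (∏ i ∈ range n, a * σ ^ i) ^ 2 = σ ^ (n ^ 2) / s ^ n := by
  induction n with
  | zero => simp
  | succ n ih =>
    rw [Finset.prod_range_succ, mul_pow, ih, mul_pow, ha]
    field_simp
    ring

lemma ratio_SV (γ t : ℝ) (hγ : 0 < γ) (ht : γ < t) (n : ℕ) :
    ZSV n t γ / (Real.sinh (t + γ) ^ (n ^ 2) * Real.exp (γ - t) ^ n)
      = Matrix.det (Matrix.of fun i j : Fin n => ∑' k : ℕ,
        (1 - Real.exp (-2 * γ) ^ (2 * (k + 1))) *
          (uSV (Real.exp (γ - t)) i k * uSV (Real.exp (γ - t)) j k)) := by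
  set s := Real.exp (γ - t) with hs
  set σ := Real.sinh (t - γ) with hσdef
  have h0 : 0 < s := Real.exp_pos _
  have h1 : s < 1 := by rw [hs, Real.exp_lt_one_iff]; linarith
  have hσ0 : 0 < σ := Real.sinh_pos_iff.mpr (by linarith)
  have hF : 0 < Real.sinh (t + γ) := Real.sinh_pos_iff.mpr (by linarith)
  have hσ : 2 * s * σ = 1 - s ^ 2 := by
    have e : Real.exp (t - γ) * s = 1 := by rw [hs, ← Real.exp_add]; simp
    rw [hσdef, Real.sinh_eq, neg_sub, ← hs]
    linear_combination e
  have ha : √(σ / s) ^ 2 = σ / s := Real.sq_sqrt (by positivity)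
  set a := √(σ / s) with hadef
  have hg : ∀ m k, gSV γ m k t = gSV γ 0 k t * (-2 * ((k : ℝ) + 1)) ^ m := by
    intro m k; simp [gSV]
  have hch := gram_change (fun k => gSV γ 0 k t) (fun k => -2 * ((k : ℝ) + 1)) (qSV a s)
    (qSV_natDegree a s) (fun m => by
      simpa only [hg m] using gSV_summable γ t hγ ht m) n
  have hτ : tauSV n t γ = (Matrix.of fun i j : Fin n =>
      ∑' k, gSV γ 0 k t * (-2 * ((k : ℝ) + 1)) ^ ((i : ℕ) + j)).det := by
    rw [tauSV]
    congr 1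
    ext i j
    simp only [Matrix.of_apply]
    rw [phiSV_iteratedDeriv γ hγ _ t ht]
    exact tsum_congr fun k => hg _ k
  rw [← hτ] at hch
  have hsq : √(1 - s ^ 2) * √(1 - s ^ 2) = 1 - s ^ 2 :=
    Real.mul_self_sqrt (by nlinarith)
  have hw : ∀ k : ℕ, gSV γ 0 k t =
      2 * s ^ (2 * (k + 1)) * (1 - Real.exp (-2 * γ) ^ (2 * (k + 1))) := by
    intro k
    have e1 : Real.exp (-2 * ((k : ℝ) + 1) * (t - γ)) = s ^ (2 * (k + 1)) := by
      rw [hs, ← Real.exp_nat_mul]; congr 1; push_cast; ring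
    have e2 : Real.exp (-2 * ((k : ℝ) + 1) * (t + γ)) =
        s ^ (2 * (k + 1)) * Real.exp (-2 * γ) ^ (2 * (k + 1)) := by
      rw [hs, ← Real.exp_nat_mul, ← Real.exp_nat_mul, ← Real.exp_add]
      congr 1; push_cast; ring
    rw [gSV, e1, e2]
    ring
  have hterm : ∀ i j k : ℕ,
      gSV γ 0 k t * ((qSV a s i).eval (-2 * ((k : ℝ) + 1)) * (qSV a s j).eval (-2 * ((k : ℝ) + 1)))
      = (1 - Real.exp (-2 * γ) ^ (2 * (k + 1))) * (uSV s i k * uSV s j k) := by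
    intro i j k
    rw [qSV_eval, qSV_eval, hw, uSV, uSV]
    have e : 2 * s ^ 2 * a ^ 2 = √(1 - s ^ 2) * √(1 - s ^ 2) := by
      rw [hsq, ha, ← hσ]
      field_simp
    linear_combination ((1 - Real.exp (-2 * γ) ^ (2 * (k + 1))) * s ^ (i + k) * s ^ (j + k) *
      MSV (s ^ 2) i k * MSV (s ^ 2) j k) * e
  simp only [hterm] at hch
  rw [hch]
  have hprod : (∏ i ∈ range n, (qSV a s i).coeff i) ^ 2 =
      σ ^ (n ^ 2) / s ^ n / (∏ j ∈ Finset.range n, (Nat.factorial j : ℝ)) ^ 2 := by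
    rw [Finset.prod_congr rfl fun i _ => qSV_coeff a s σ h0 h1 hσ i, Finset.prod_div_distrib,
      div_pow, prod_sq_SV a s σ h0 ha]
  rw [hprod, ZSV, ← hσdef, mul_pow]
  have hpf : (∏ j ∈ Finset.range n, (Nat.factorial j : ℝ)) ≠ 0 :=
    Finset.prod_ne_zero_iff.mpr fun j _ => by positivity
  field_simp

/-- For every `γ > 0` there exist `d₀(γ), d₁(γ)` such that for every `t > γ` the limit
`C(γ,t) = lim_{n→∞} Z_n/(F^{n²} G^n)` exists, is positive, and
`ln C(γ,t) = d₁(γ) t + d₀(γ)`; i.e., `t ↦ ln C(γ,t)` is affine on `(γ,∞)`. -/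
theorem log_C_affine_in_t
    (γ : ℝ) (hγ : 0 < γ) :
    ∃ d₀ d₁ : ℝ, ∀ t : ℝ, γ < t →
      ∃ C : ℝ, 0 < C ∧
        Filter.Tendsto
          (fun n : ℕ => ZSV n t γ / (Real.sinh (t + γ) ^ (n ^ 2) * Real.exp (γ - t) ^ n))
          Filter.atTop (nhds C) ∧
        Real.log C = d₁ * t + d₀ := by
  have h0 : 0 < Real.exp (-2 * γ) := Real.exp_pos _
  have h1 : Real.exp (-2 * γ) < 1 := by rw [Real.exp_lt_one_iff]; linarith
  set ρ := Real.exp (-2 * γ) with hρ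
  have hpos : ∀ k : ℕ, 0 < 1 - ρ ^ (2 * (k + 1)) := fun k =>
    sub_pos.mpr (pow_lt_one₀ h0.le h1 (by lia))
  have hsum : Summable fun k : ℕ => -ρ ^ (2 * (k + 1)) := by
    have h := ((summable_geometric_of_lt_one (sq_nonneg ρ) (by nlinarith : ρ ^ 2 < 1)).mul_left
      (-ρ ^ 2))
    refine h.congr fun k => ?_
    ring
  have hlog : Summable fun k : ℕ => Real.log (1 - ρ ^ (2 * (k + 1))) := by
    simpa only [sub_eq_add_neg] using Real.summable_log_one_add_of_summable hsum
  have hP := (Real.hasProd_of_hasSum_log hpos hlog.hasSum).tendsto_prod_nat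
  refine ⟨∑' k : ℕ, Real.log (1 - ρ ^ (2 * (k + 1))), 0, fun t ht =>
    ⟨Real.exp (∑' k : ℕ, Real.log (1 - ρ ^ (2 * (k + 1)))), Real.exp_pos _, ?_, ?_⟩⟩
  · have hs1 : Real.exp (γ - t) < 1 := by rw [Real.exp_lt_one_iff]; linarith
    exact fredholm_limit (uSV (Real.exp (γ - t))) (uSV_symm _)
      (uSV_orth _ (Real.exp_pos _) hs1) ρ h0 h1 _ (fun n => ratio_SV γ t hγ ht n) _ hP
  · rw [Real.log_exp]; ring
end

section
/- Fix t > γ > 0 and let φ(s) = sinh(2γ)/(sinh(s+γ) sinh(s−γ)). Then for every m ≥ 0 the m-th derivative satisfies φ^{(m)}(t) = 4 ∑_{l=1}^∞ (−2l)^m e^{−2tl} sinh(2γl), and for every n ≥ 1 the Hankel determinant satisfies det( φ^{(j+k−2)}(t) )_{1≤j,k≤n} = (2^{n²}/n!) ∑_{l₁,…,l_n = 1}^∞ (∏_{1≤i<j≤n} (l_j − l_i)²) ∏_{i=1}^n (2 e^{−2t l_i} sinh(2γ l_i)). -/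
open Real Finset

/-- Product of absolutely convergent series as a multi-sum. -/
lemma pi_hasSum_aux (n : ℕ) (f : Fin n → ℕ → ℝ) (h : ∀ i, Summable fun k => ‖f i k‖) :
    Summable (fun l : Fin n → ℕ => ‖∏ i, f i (l i)‖) ∧
      HasSum (fun l : Fin n → ℕ => ∏ i, f i (l i)) (∏ i, ∑' k, f i k) := by
  induction n with
  | zero =>
    refine ⟨(hasSum_fintype _).summable, ?_⟩
    simp
  | succ n ih =>
    obtain ⟨h1, h2⟩ := ih (fun i => f i.succ) (fun i => h i.succ)
    have hs : Summable (fun p : ℕ × (Fin n → ℕ) => ‖f 0 p.1 * ∏ i : Fin n, f i.succ (p.2 i)‖) :=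
      Summable.mul_norm (f := f 0) (g := fun q : Fin n → ℕ => ∏ i : Fin n, f i.succ (q i)) (h 0) h1
    have hS := (h 0).of_norm.hasSum.mul h2 hs.of_norm
    constructor
    · rw [← (Fin.consEquiv (fun _ : Fin (n + 1) => ℕ)).summable_iff]
      refine hs.congr fun p => ?_
      simp [Fin.prod_univ_succ, Fin.consEquiv]
    · rw [← (Fin.consEquiv (fun _ : Fin (n + 1) => ℕ)).hasSum_iff, Fin.prod_univ_succ]
      refine (congrArg (fun F => HasSum F _) ?_).mpr hS
      funext p
      simp [Fin.prod_univ_succ, Fin.consEquiv]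

/-- The discrete Andréief identity. -/
lemma andreief_aux (n : ℕ) (x w : ℕ → ℝ) (hs : ∀ m : ℕ, Summable fun k => ‖x k ^ m * w k‖) :
    HasSum (fun l : Fin n → ℕ =>
      (Matrix.vandermonde fun i => x (l i)).det ^ 2 * ∏ i, w (l i))
      ((n.factorial : ℝ) *
        Matrix.det (Matrix.of fun j k : Fin n => ∑' l, x l ^ ((j : ℕ) + (k : ℕ)) * w l)) := by
  set D := Matrix.det (Matrix.of fun j k : Fin n => ∑' l, x l ^ ((j : ℕ) + (k : ℕ)) * w l) with hD
  set G : (Fin n → ℕ) → ℝ := fun l => (∏ i, w (l i)) * (∏ i : Fin n, x (l i) ^ (i : ℕ)) *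
    (Matrix.vandermonde fun i => x (l i)).det with hG
  have h1 : HasSum G D := by
    rw [hD, Matrix.det_apply']
    have := hasSum_sum (s := (Finset.univ : Finset (Equiv.Perm (Fin n)))) (fun σ _ =>
      ((pi_hasSum_aux n (fun i k => x k ^ ((σ i : ℕ) + (i : ℕ)) * w k)
        (fun i => hs _)).2.mul_left (((Equiv.Perm.sign σ : ℤ) : ℝ))))
    refine (congrArg (fun F => HasSum F _) ?_).mpr this
    funext l
    rw [hG]
    simp only
    rw [← Matrix.det_transpose, Matrix.det_apply', Finset.mul_sum]
    refine Finset.sum_congr rfl fun σ _ => ?_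
    simp only [Matrix.transpose_apply, Matrix.vandermonde_apply, pow_add, Finset.prod_mul_distrib]
    ring
  have h2 : ∀ τ : Equiv.Perm (Fin n), HasSum (fun l : Fin n → ℕ => G (fun i => l (τ i))) D := by
    intro τ
    exact ((Equiv.arrowCongr τ.symm (Equiv.refl ℕ)).hasSum_iff (f := G)).2 h1
  have h3 := hasSum_sum (s := (Finset.univ : Finset (Equiv.Perm (Fin n)))) (fun τ _ => h2 τ)
  simp only [Finset.sum_const, Finset.card_univ, Fintype.card_perm, Fintype.card_fin,
    nsmul_eq_mul] at h3
  refine (congrArg (fun F => HasSum F _) ?_).mpr h3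
  funext l
  have key : ∀ τ : Equiv.Perm (Fin n), G (fun i => l (τ i)) =
      ((∏ i, w (l i)) * (Matrix.vandermonde fun i => x (l i)).det) *
        (((Equiv.Perm.sign τ : ℤ) : ℝ) *
          ∏ i : Fin n, (Matrix.vandermonde fun i => x (l i)) (τ i) i) := by
    intro τ
    have e1 : ∏ i, w (l (τ i)) = ∏ i, w (l i) := Equiv.prod_comp τ (fun i => w (l i))
    have e2 : (Matrix.vandermonde fun i => x (l (τ i))).det =
        ((Equiv.Perm.sign τ : ℤ) : ℝ) * (Matrix.vandermonde fun i => x (l i)).det := by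
      rw [← Matrix.det_permute]
      rfl
    simp only [hG, e1, e2, Matrix.vandermonde_apply]
    ring
  simp only [key]
  rw [← Finset.mul_sum, ← Matrix.det_apply']
  ring

lemma sinh_abs_bound (γ : ℝ) (hγ : 0 < γ) (l : ℕ) :
    |Real.sinh (2 * γ * ((l : ℝ) + 1))| ≤ Real.exp (2 * γ * ((l : ℝ) + 1)) := by
  have h0 : (0 : ℝ) ≤ 2 * γ * ((l : ℝ) + 1) := by positivity
  rw [abs_of_nonneg (Real.sinh_nonneg_iff.2 h0), Real.sinh_eq]
  have := Real.exp_pos (2 * γ * ((l : ℝ) + 1))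
  have := Real.exp_pos (-(2 * γ * ((l : ℝ) + 1)))
  linarith

lemma summable_bound_aux (γ a : ℝ) (ha : γ < a) (m : ℕ) :
    Summable fun l : ℕ => (2 * ((l : ℝ) + 1)) ^ m * Real.exp (-2 * (a - γ) * ((l : ℝ) + 1)) := by
  have h := (Real.summable_pow_mul_exp_neg_nat_mul m (r := 2 * (a - γ)) (by linarith))
  have h' := ((summable_nat_add_iff 1).2 h).mul_left ((2 : ℝ) ^ m)
  refine h'.congr fun l => ?_
  push_cast
  rw [mul_pow, mul_assoc]
  congr 3
  ring_nf

lemma term_bound_aux (γ a s : ℝ) (hγ : 0 < γ) (has : a ≤ s) (m l : ℕ) :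
    ‖(-2 * ((l : ℝ) + 1)) ^ m * Real.exp (-2 * s * ((l : ℝ) + 1)) *
      Real.sinh (2 * γ * ((l : ℝ) + 1))‖ ≤
    (2 * ((l : ℝ) + 1)) ^ m * Real.exp (-2 * (a - γ) * ((l : ℝ) + 1)) := by
  have hl : (0 : ℝ) ≤ (l : ℝ) + 1 := by positivity
  rw [norm_mul, norm_mul, norm_pow, Real.norm_eq_abs, Real.norm_eq_abs, Real.norm_eq_abs,
    Real.abs_exp, mul_assoc]
  have e : |-2 * ((l : ℝ) + 1)| = 2 * ((l : ℝ) + 1) := by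
    rw [abs_mul, abs_of_nonneg hl]; norm_num
  rw [e]
  refine mul_le_mul_of_nonneg_left ?_ (by positivity)
  calc _ ≤ Real.exp (-2 * s * ((l : ℝ) + 1)) * Real.exp (2 * γ * ((l : ℝ) + 1)) :=
        mul_le_mul_of_nonneg_left (sinh_abs_bound γ hγ l) (Real.exp_pos _).le
    _ = Real.exp (-2 * (s - γ) * ((l : ℝ) + 1)) := by rw [← Real.exp_add]; ring_nf
    _ ≤ _ := by
      apply Real.exp_le_exp.2
      nlinarith

lemma term_summable_aux (γ s : ℝ) (hγ : 0 < γ) (hs : γ < s) (m : ℕ) :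
    Summable fun l : ℕ => ‖(-2 * ((l : ℝ) + 1)) ^ m * Real.exp (-2 * s * ((l : ℝ) + 1)) *
      Real.sinh (2 * γ * ((l : ℝ) + 1))‖ :=
  Summable.of_nonneg_of_le (fun _ => norm_nonneg _)
    (fun l => term_bound_aux γ s s hγ le_rfl m l) (summable_bound_aux γ s hs m)

lemma series_hasDerivAt (γ s : ℝ) (hγ : 0 < γ) (hs : γ < s) (m : ℕ) :
    HasDerivAt (fun s : ℝ => ∑' l : ℕ, (-2 * ((l : ℝ) + 1)) ^ m *
      Real.exp (-2 * s * ((l : ℝ) + 1)) * Real.sinh (2 * γ * ((l : ℝ) + 1)))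
      (∑' l : ℕ, (-2 * ((l : ℝ) + 1)) ^ (m + 1) *
      Real.exp (-2 * s * ((l : ℝ) + 1)) * Real.sinh (2 * γ * ((l : ℝ) + 1))) s := by
  obtain ⟨a, ha, has⟩ := exists_between hs
  refine hasDerivAt_tsum_of_isPreconnected (t := Set.Ioi a) (y₀ := s)
    (g := fun (l : ℕ) (s : ℝ) => (-2 * ((l : ℝ) + 1)) ^ m *
      Real.exp (-2 * s * ((l : ℝ) + 1)) * Real.sinh (2 * γ * ((l : ℝ) + 1)))
    (g' := fun (l : ℕ) (s : ℝ) => (-2 * ((l : ℝ) + 1)) ^ (m + 1) *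
      Real.exp (-2 * s * ((l : ℝ) + 1)) * Real.sinh (2 * γ * ((l : ℝ) + 1)))
    (summable_bound_aux γ a ha (m + 1)) isOpen_Ioi isPreconnected_Ioi ?_ ?_ has
    (term_summable_aux γ s hγ hs m).of_norm has
  · intro l y _
    have h1 : HasDerivAt (fun s : ℝ => -2 * s * ((l : ℝ) + 1)) (-2 * 1 * ((l : ℝ) + 1)) y :=
      ((hasDerivAt_id y).const_mul (-2)).mul_const _
    have h2 := (h1.exp.const_mul ((-2 * ((l : ℝ) + 1)) ^ m)).mul_const
      (Real.sinh (2 * γ * ((l : ℝ) + 1)))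
    exact h2.congr_deriv (by ring)
  · intro l y hy
    exact term_bound_aux γ a y hγ (le_of_lt hy) (m + 1) l

lemma geom_aux (r : ℝ) (h0 : 0 ≤ r) (h1 : r < 1) :
    HasSum (fun l : ℕ => r ^ (l + 1)) (r / (1 - r)) := by
  have := (hasSum_geometric_of_lt_one h0 h1).mul_left r
  simpa [pow_succ', div_eq_mul_inv] using this

lemma exp_ratio_aux (u : ℝ) (hu : 0 < u) :
    Real.exp (-2 * u) / (1 - Real.exp (-2 * u)) = Real.exp (-u) / (2 * Real.sinh u) := by
  have h1 : Real.exp (-2 * u) = Real.exp (-u) * Real.exp (-u) := by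
    rw [← Real.exp_add]; ring_nf
  have h2 : Real.exp u * Real.exp (-u) = 1 := by rw [← Real.exp_add]; simp
  have hs : 0 < Real.sinh u := Real.sinh_pos_iff.2 hu
  have hlt : Real.exp (-2 * u) < 1 := by
    rw [Real.exp_lt_one_iff]; linarith
  rw [div_eq_div_iff (by linarith) (by positivity), h1, Real.sinh_eq]
  linear_combination (Real.exp (-u)) * h2

lemma phi_series_s10 (γ s : ℝ) (hγ : 0 < γ) (hs : γ < s) :
    phiSV γ s = 4 * ∑' l : ℕ, (-2 * ((l : ℝ) + 1)) ^ 0 *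
          Real.exp (-2 * s * ((l : ℝ) + 1)) * Real.sinh (2 * γ * ((l : ℝ) + 1)) := by
  have ha := geom_aux (Real.exp (-2 * (s - γ))) (Real.exp_pos _).le
    (by rw [Real.exp_lt_one_iff]; linarith)
  have hb := geom_aux (Real.exp (-2 * (s + γ))) (Real.exp_pos _).le
    (by rw [Real.exp_lt_one_iff]; linarith)
  have hab := (ha.sub hb).mul_left (1 / 2)
  have hterm : (fun l : ℕ => (-2 * ((l : ℝ) + 1)) ^ 0 *
          Real.exp (-2 * s * ((l : ℝ) + 1)) * Real.sinh (2 * γ * ((l : ℝ) + 1))) =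
      fun l : ℕ => 1 / 2 * (Real.exp (-2 * (s - γ)) ^ (l + 1) -
        Real.exp (-2 * (s + γ)) ^ (l + 1)) := by
    funext l
    rw [← Real.exp_nat_mul, ← Real.exp_nat_mul, Real.sinh_eq]
    have e1 : ((l + 1 : ℕ) : ℝ) * (-2 * (s - γ)) =
      -2 * s * ((l : ℝ) + 1) + 2 * γ * ((l : ℝ) + 1) := by push_cast; ring
    have e2 : ((l + 1 : ℕ) : ℝ) * (-2 * (s + γ)) =
      -2 * s * ((l : ℝ) + 1) + -(2 * γ * ((l : ℝ) + 1)) := by push_cast; ring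
    rw [e1, e2, Real.exp_add, Real.exp_add]
    ring
  rw [hterm, hab.tsum_eq, exp_ratio_aux _ (by linarith), exp_ratio_aux _ (by linarith), phiSV]
  have h1 : 0 < Real.sinh (s + γ) := Real.sinh_pos_iff.2 (by linarith)
  have h2 : 0 < Real.sinh (s - γ) := Real.sinh_pos_iff.2 (by linarith)
  have num : Real.sinh (2 * γ) = Real.exp (-(s - γ)) * Real.sinh (s + γ) -
      Real.exp (-(s + γ)) * Real.sinh (s - γ) := by
    rw [Real.sinh_eq, Real.sinh_eq, Real.sinh_eq]
    have e1 : Real.exp (2 * γ) = Real.exp (-(s - γ)) * Real.exp (s + γ) := by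
      rw [← Real.exp_add]; ring_nf
    have e2 : Real.exp (-(2 * γ)) = Real.exp (-(s + γ)) * Real.exp (s - γ) := by
      rw [← Real.exp_add]; ring_nf
    rw [e1, e2]
    ring
  rw [num]
  field_simp
  ring

lemma phi_iter_s10 (γ : ℝ) (hγ : 0 < γ) (m : ℕ) : ∀ t, γ < t →
      iteratedDeriv m (phiSV γ) t =
        4 * ∑' l : ℕ, (-2 * ((l : ℝ) + 1)) ^ m *
          Real.exp (-2 * t * ((l : ℝ) + 1)) * Real.sinh (2 * γ * ((l : ℝ) + 1)) := by
  induction m with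
  | zero =>
    intro t ht
    rw [iteratedDeriv_zero]
    exact phi_series_s10 γ t hγ ht
  | succ m ih =>
    intro t ht
    rw [iteratedDeriv_succ]
    have he : iteratedDeriv m (phiSV γ) =ᶠ[nhds t] fun t => 4 * ∑' l : ℕ, (-2 * ((l : ℝ) + 1)) ^ m *
          Real.exp (-2 * t * ((l : ℝ) + 1)) * Real.sinh (2 * γ * ((l : ℝ) + 1)) := by
      filter_upwards [Ioi_mem_nhds ht] with y hy using ih y hy
    rw [he.deriv_eq]
    exact ((series_hasDerivAt γ t hγ ht m).const_mul 4).deriv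

/-- **Derivatives of `φ` and the Hankel determinant as a multiple sum.**
For `t > γ > 0`: `φ^{(m)}(t) = 4 ∑_{l≥1} (-2l)^m e^{-2tl} sinh(2γl)` for every `m`, and
`det(φ^{(j+k-2)}(t))_{1≤j,k≤n} = (2^{n²}/n!) ∑_{l₁,…,l_n ≥ 1} ∏_{i<j}(l_j-l_i)²
∏_i 2 e^{-2t l_i} sinh(2γ l_i)` for every `n ≥ 1`. -/
theorem phi_derivatives_and_hankel_determinant
    (t γ : ℝ) (hγ : 0 < γ) (ht : γ < t) :
    (∀ m : ℕ,
      iteratedDeriv m (phiSV γ) t =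
        4 * ∑' l : ℕ, (-2 * ((l : ℝ) + 1)) ^ m *
          Real.exp (-2 * t * ((l : ℝ) + 1)) * Real.sinh (2 * γ * ((l : ℝ) + 1))) ∧
    (∀ n : ℕ, 1 ≤ n →
      Matrix.det (Matrix.of fun j k : Fin n =>
          iteratedDeriv ((j : ℕ) + (k : ℕ)) (phiSV γ) t) =
        ((2 : ℝ) ^ (n ^ 2) / (n.factorial : ℝ)) *
          ∑' l : Fin n → ℕ,
            (∏ i : Fin n, ∏ j ∈ Finset.univ.filter (fun j : Fin n => i < j),
                (((l j : ℝ) + 1) - ((l i : ℝ) + 1)) ^ 2) *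
              ∏ i : Fin n,
                2 * Real.exp (-2 * t * ((l i : ℝ) + 1)) *
                  Real.sinh (2 * γ * ((l i : ℝ) + 1))) := by
  refine ⟨fun m => phi_iter_s10 γ hγ m t ht, fun n _ => ?_⟩
  have hsum : ∀ m : ℕ, Summable fun k : ℕ => ‖(-2 * ((k : ℝ) + 1)) ^ m *
      (4 * (Real.exp (-2 * t * ((k : ℝ) + 1)) * Real.sinh (2 * γ * ((k : ℝ) + 1))))‖ := by
    intro m
    refine ((term_summable_aux γ t hγ ht m).mul_left 4).congr fun k => ?_
    simp only [norm_mul]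
    norm_num
    ring
  have hA := andreief_aux n (fun k : ℕ => -2 * ((k : ℝ) + 1))
    (fun k : ℕ => 4 * (Real.exp (-2 * t * ((k : ℝ) + 1)) * Real.sinh (2 * γ * ((k : ℝ) + 1)))) hsum
  have hM : (Matrix.of fun j k : Fin n => iteratedDeriv ((j : ℕ) + (k : ℕ)) (phiSV γ) t) =
      Matrix.of fun j k : Fin n => ∑' l : ℕ, (-2 * ((l : ℝ) + 1)) ^ ((j : ℕ) + (k : ℕ)) *
      (4 * (Real.exp (-2 * t * ((l : ℝ) + 1)) * Real.sinh (2 * γ * ((l : ℝ) + 1)))) := by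
    ext j k
    rw [Matrix.of_apply, Matrix.of_apply, phi_iter_s10 γ hγ _ t ht, ← tsum_mul_left]
    refine tsum_congr fun l => ?_
    ring
  rw [← hM] at hA
  have hfac : (n.factorial : ℝ) ≠ 0 := by exact_mod_cast n.factorial_ne_zero
  rw [div_mul_eq_mul_div, eq_div_iff hfac, mul_comm, ← hA.tsum_eq, ← tsum_mul_left]
  refine tsum_congr fun l => ?_
  -- the Vandermonde matrix scales by a diagonal matrix
  have hV : (Matrix.vandermonde fun i => -2 * ((l i : ℝ) + 1)).det =
      (∏ i : Fin n, (-2 : ℝ) ^ (i : ℕ)) * (Matrix.vandermonde fun i => ((l i : ℝ) + 1)).det := by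
    rw [← Matrix.det_mul_row]
    congr 1
    ext i j
    simp only [Matrix.vandermonde_apply, Matrix.of_apply, mul_pow]
  have hdeg : (∏ i : Fin n, (-2 : ℝ) ^ (i : ℕ)) ^ 2 * 2 ^ n = 2 ^ (n ^ 2) := by
    rw [Fin.prod_univ_eq_prod_range (fun i => (-2 : ℝ) ^ i) n, Finset.prod_pow_eq_pow_sum,
      ← pow_mul, Finset.sum_range_id_mul_two]
    have hev : Even (n * (n - 1)) := Nat.even_mul_pred_self n
    rw [hev.neg_pow, ← pow_add]
    congr 1
    cases n with
    | zero => rfl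
    | succ k => simp; ring
  have hW : (∏ i : Fin n, (4 * (Real.exp (-2 * t * ((l i : ℝ) + 1)) *
      Real.sinh (2 * γ * ((l i : ℝ) + 1))))) =
      2 ^ n * ∏ i : Fin n, 2 * Real.exp (-2 * t * ((l i : ℝ) + 1)) *
                  Real.sinh (2 * γ * ((l i : ℝ) + 1)) := by
    have : (2 : ℝ) ^ n = ∏ _i : Fin n, (2 : ℝ) := by simp
    rw [this, ← Finset.prod_mul_distrib]
    refine Finset.prod_congr rfl fun i _ => ?_
    ring
  have hdet : (∏ i : Fin n, ∏ j ∈ Finset.univ.filter (fun j : Fin n => i < j),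
      (((l j : ℝ) + 1) - ((l i : ℝ) + 1)) ^ 2) =
      (Matrix.vandermonde fun i => ((l i : ℝ) + 1)).det ^ 2 := by
    rw [Matrix.det_vandermonde, ← Finset.prod_pow]
    refine Finset.prod_congr rfl fun i _ => ?_
    rw [← Finset.prod_pow]
    refine Finset.prod_congr ?_ fun _ _ => rfl
    ext j
    simp
  rw [hV, hW, hdet, ← hdeg]
  ring
end
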